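/- arXiv:2605.03347 — 2 statements merged into one kernel-verified Lean document; each statement's English description precedes it below -/
import Mathlib

section
/- Let K be a field, k ≥ 0 an integer, n = 4k + 3, R = K[x_1,…,x_n], and let J(P_n) be the cover ideal of the path graph P_n. Then for every integer t ≥ k + 1, depth(R/J(P_n)^t) = 2k + 1. -/
/-!
Vertices are numbered `0, …, 2m` with `m = 2k + 1`; put `S = K[x_0, …, x_{2m}]`, `J = J(P_n)`.

**Powers of `J`.** Since the path is bipartite, `J ^ t` is the monomial ideal spanned by the
`x^u` with `u_a + u_b ≥ t` on every edge: from such a `u` with `t ≥ 1` one can always split off a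
vertex cover so that the rest satisfies the same condition for `t - 1` (`coverIdeal_pow_eq`).
For a fixed odd part of `u`, this asks each even exponent `u_a` to be at least a number `c_a(u)`
(`need`) depending only on the odd part. So `S / J ^ t` is a direct sum of quotients of the
polynomial ring in the `m + 1` even variables by principal monomial ideals.

**A regular sequence of length `m`.** It is given by the differences `x_{2i} - x_{2i+2}`, `i < m`.
Dividing out the first `i` of them merges `x_0, …, x_{2i}` into `x_{2i}`, and `J ^ t` becomes the
monomial ideal of the `v` with `∑_{a ≤ 2i} c_a(v) ≤ v_{2i}` and `c_a(v) ≤ v_a` for even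
`a > 2i` (`mem_sup_iff`). The next difference is a nonzerodivisor modulo this ideal, by comparing
coefficients (`mul_mem_merged`).

**Maximality.** After all `m` differences, the ideal consists of the `v` with
`∑_a c_a(v) ≤ v_{2m}`. Let `v` have exponent `|j - k|` at the odd vertex `2j + 1` and exponent
`∑_a c_a(v) - 1` at `2m`. Then `x^v` is a nonzero socle element: raising any odd exponent lowers
some `c_a`, which is where `t ≥ k + 1` enters (`exists_socle`). Hence `Hom(S/𝔪, -)` of the last
quotient is nonzero, and the long exact sequences together with the Rees theorem forbid a regular
sequence in `𝔪` of length greater than `m` (`length_le_of_socle`).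
-/

open MvPolynomial

/-- The cover ideal `J(G) = ⋂_{{u,v} ∈ E(G)} (x_u, x_v)` of a graph `G` on `{1,…,n}`,
inside `R = K[x_1,…,x_n]`. -/
noncomputable def coverIdeal (K : Type*) [Field K] {n : ℕ} (G : SimpleGraph (Fin n)) :
    Ideal (MvPolynomial (Fin n) K) :=
  ⨅ (u : Fin n) (v : Fin n) (_ : G.Adj u v), Ideal.span {X u, X v}

/-- The maximal homogeneous ideal `(x_1,…,x_n)` of `K[x_1,…,x_n]`. -/
noncomputable def maxIdeal (K : Type*) [Field K] (n : ℕ) : Ideal (MvPolynomial (Fin n) K) :=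
  Ideal.span (Set.range (X : Fin n → MvPolynomial (Fin n) K))

/-- `depth(R/I)` with respect to the maximal homogeneous ideal: the supremum of the
lengths of `R/I`-regular sequences consisting of elements of `(x_1,…,x_n)`. -/
noncomputable def depthQuot (K : Type*) [Field K] (n : ℕ)
    (I : Ideal (MvPolynomial (Fin n) K)) : ℕ :=
  sSup {d : ℕ | ∃ rs : List (MvPolynomial (Fin n) K), rs.length = d ∧
    (∀ r ∈ rs, r ∈ maxIdeal K n) ∧
    RingTheory.Sequence.IsRegular ((MvPolynomial (Fin n) K) ⧸ I) rs}

/-! ### Regular sequences and socles -/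

open CategoryTheory Abelian in
/-- Dimension shifting: each step of a weakly regular sequence `ds` costs one degree of vanishing of
`Ext N M`, so vanishing up to degree `ds.length` leaves `Hom(N, M / (ds) M) = 0`. -/
theorem subsingleton_hom_of_ext {R : Type*} [CommRing R] (N : ModuleCat R) (ds : List R)
    (M : ModuleCat R) (hds : RingTheory.Sequence.IsWeaklyRegular M ds)
    (hext : ∀ i ≤ ds.length, Subsingleton (Ext N M i)) :
    Subsingleton (N →ₗ[R] (M ⧸ (Ideal.ofList ds • ⊤ : Submodule R M))) := by
  induction ds generalizing M with
  | nil =>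
    have : Subsingleton (N →ₗ[R] M) :=
      (Ext.addEquiv₀.trans ModuleCat.homAddEquiv).symm.subsingleton_congr.mpr (hext 0 le_rfl)
    have e : (Ideal.ofList ([] : List R) • ⊤ : Submodule R M) = ⊥ := by simp
    exact (LinearEquiv.congrRight (M := N) (Submodule.quotEquivOfEqBot _ e)).toEquiv.subsingleton
  | cons r rs ih =>
    rw [RingTheory.Sequence.isWeaklyRegular_cons_iff] at hds
    have := ih (ModuleCat.of R (QuotSMulTop r M)) hds.2 (fun i hi ↦ by
      have zero1 := AddCommGrpCat.isZero_of_iff_subsingleton.mpr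
        (hext i (by simp only [List.length_cons]; omega))
      have zero2 := AddCommGrpCat.isZero_of_iff_subsingleton.mpr
        (hext (i + 1) (by simp only [List.length_cons]; omega))
      exact AddCommGrpCat.subsingleton_of_isZero <| ShortComplex.Exact.isZero_of_both_zeros
        ((Ext.covariant_sequence_exact₃' N hds.1.smulShortComplex_shortExact) i (i + 1) rfl)
        (zero1.eq_zero_of_src _) (zero2.eq_zero_of_tgt _))
    exact (LinearEquiv.congrRight (M := N)
      (Submodule.quotOfListConsSMulTopEquivQuotSMulTopInner M r rs)).toEquiv.subsingleton

theorem mk_mem_smul_top {R : Type*} [CommRing R] (I D : Ideal R) (f : R) :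
    (Ideal.Quotient.mk I f) ∈ (D • ⊤ : Submodule R (R ⧸ I)) ↔ f ∈ I ⊔ D := by
  have := Submodule.comap_smul_top_of_surjective D (Submodule.mkQ I) (Submodule.mkQ_surjective I)
  rw [Submodule.ker_mkQ, smul_eq_mul, Ideal.mul_top, sup_comm] at this
  rw [← this]
  rfl

theorem isWeaklyRegular_quotient {R : Type*} [CommRing R] (I : Ideal R) (ds : List R)
    (h : ∀ i (hi : i < ds.length) (f : R), ds[i] * f ∈ I ⊔ Ideal.ofList (ds.take i) →
      f ∈ I ⊔ Ideal.ofList (ds.take i)) :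
    RingTheory.Sequence.IsWeaklyRegular (R ⧸ I) ds := by
  refine ⟨fun i hi ↦ ?_⟩
  rw [isSMulRegular_iff_right_eq_zero_of_smul]
  intro x hx
  obtain ⟨x, rfl⟩ := Submodule.mkQ_surjective _ x
  obtain ⟨f, rfl⟩ := Ideal.Quotient.mk_surjective x
  rw [← map_smul, Submodule.mkQ_apply, Submodule.Quotient.mk_eq_zero] at hx
  rw [Submodule.mkQ_apply, Submodule.Quotient.mk_eq_zero, mk_mem_smul_top]
  exact h i hi f ((mk_mem_smul_top _ _ _).1 hx)

/-- If `ds` is weakly regular on `R / I` and `w` represents a nonzero element of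
`(R / I) / (ds)` killed by `𝔪`, then no regular sequence on `R / I` with entries in `𝔪` is longer
than `ds`. The entries of `ds` need not lie in `𝔪`. -/
theorem length_le_of_socle {R : Type*} [CommRing R] [IsNoetherianRing R] (𝔪 I : Ideal R)
    (ds rs : List R) (hds : RingTheory.Sequence.IsWeaklyRegular (R ⧸ I) ds)
    (w : R) (hw : w ∉ I ⊔ Ideal.ofList ds) (hsoc : ∀ r ∈ 𝔪, r * w ∈ I ⊔ Ideal.ofList ds)
    (hmem : ∀ r ∈ rs, r ∈ 𝔪) (hrs : RingTheory.Sequence.IsRegular (R ⧸ I) rs)  :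
    rs.length ≤ ds.length := by
  by_contra! hlt
  have hproper : 𝔪 • (⊤ : Submodule R (R ⧸ I)) < ⊤ := by
    rw [lt_top_iff_ne_top]
    intro htop
    have h1 : (1 : R) ∈ I ⊔ 𝔪 := by
      rw [← mk_mem_smul_top, htop]; trivial
    obtain ⟨a, ha, b, hb, hab⟩ := Submodule.mem_sup.1 h1
    apply hw
    rw [← one_mul w, ← hab, add_mul]
    exact add_mem (Ideal.mul_mem_right _ _ (Ideal.mem_sup_left ha)) (hsoc b hb)
  have hext := ModuleCat.subsingleton_ext_of_exists_isRegular 𝔪 (ModuleCat.of R (R ⧸ 𝔪))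
    (by rw [Module.support_eq_zeroLocus, Ideal.annihilator_quotient])
    (ModuleCat.of R (R ⧸ I)) hproper rs hmem hrs
  have hsub := subsingleton_hom_of_ext (ModuleCat.of R (R ⧸ 𝔪)) ds (ModuleCat.of R (R ⧸ I)) hds
    (fun i hi ↦ hext i (by omega))
  let Q := (R ⧸ I) ⧸ (Ideal.ofList ds • ⊤ : Submodule R (R ⧸ I))
  let z : Q := Submodule.Quotient.mk (Ideal.Quotient.mk I w)
  have hker : 𝔪 ≤ LinearMap.ker (LinearMap.toSpanSingleton R Q z) := by
    intro r hr
    rw [LinearMap.mem_ker, LinearMap.toSpanSingleton_apply]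
    exact (Submodule.Quotient.mk_eq_zero _).2 ((mk_mem_smul_top _ _ _).2 (hsoc r hr))
  have h0 : Submodule.liftQ 𝔪 (LinearMap.toSpanSingleton R Q z) hker = 0 := hsub.elim _ _
  have h1 := LinearMap.congr_fun h0 (Submodule.Quotient.mk 1)
  rw [Submodule.liftQ_apply, LinearMap.toSpanSingleton_apply, one_smul] at h1
  exact hw ((mk_mem_smul_top _ _ _).1 ((Submodule.Quotient.mk_eq_zero _).1 h1))

/-! ### Monomial ideals -/

section monomial
variable {σ K : Type*} [Field K]

/-- The ideal spanned by the monomials `x^u` with exponent vector `u ∈ s`. -/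
noncomputable def monIdeal (K : Type*) [Field K] (s : Set (σ →₀ ℕ)) : Ideal (MvPolynomial σ K) :=
  Ideal.span ((fun u ↦ monomial u 1) '' s)

theorem mem_monIdeal {s : Set (σ →₀ ℕ)} (hs : IsUpperSet s) {f : MvPolynomial σ K} :
    f ∈ monIdeal K s ↔ ∀ u ∈ f.support, u ∈ s := by
  rw [monIdeal, mem_ideal_span_monomial_image]
  exact forall₂_congr fun u _ ↦ ⟨fun ⟨v, hv, hvu⟩ ↦ hs hvu hv, fun h ↦ ⟨u, h, le_rfl⟩⟩

theorem monomial_mem_monIdeal {s : Set (σ →₀ ℕ)} {u : σ →₀ ℕ} (hu : u ∈ s) :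
    (monomial u 1 : MvPolynomial σ K) ∈ monIdeal K s :=
  Ideal.subset_span ⟨u, hu, rfl⟩

theorem monIdeal_le {s : Set (σ →₀ ℕ)} {I : Ideal (MvPolynomial σ K)}
    (h : ∀ u ∈ s, monomial u 1 ∈ I) : monIdeal K s ≤ I := by
  rw [monIdeal, Ideal.span_le]; rintro _ ⟨u, hu, rfl⟩; exact h u hu

theorem monIdeal_mul_le {s s' s'' : Set (σ →₀ ℕ)} (h : ∀ u ∈ s, ∀ v ∈ s', u + v ∈ s'') :
    monIdeal K s * monIdeal K s' ≤ monIdeal K s'' := by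
  rw [monIdeal, monIdeal, Ideal.span_mul_span', Ideal.span_le]
  rintro _ ⟨_, ⟨u, hu, rfl⟩, _, ⟨v, hv, rfl⟩, rfl⟩
  simp only [monomial_mul, mul_one]
  exact monomial_mem_monIdeal (h u hu v hv)

/-- If the coefficients of `(x_p - x_{p'}) g` vanish on a set `B` of exponents that is stable under
multiplication by `x_p` and (truncated) division by `x_{p'}`, then so do those of `g`. Since
`g_v - g_{v + e_p - e_{p'}}` is the coefficient at `v + e_p`, this is an induction on `v p'`. -/
theorem coeff_eq_zero_of_sub_mul {p p' : σ} (hp : p ≠ p') {g : MvPolynomial σ K}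
    {B : Set (σ →₀ ℕ)} (hB1 : ∀ v ∈ B, v + Finsupp.single p 1 ∈ B)
    (hB2 : ∀ v ∈ B, v - Finsupp.single p' 1 ∈ B)
    (hg : ∀ v ∈ B, coeff v ((X p - X p') * g) = 0) (v) (hv : v ∈ B) : coeff v g = 0 := by
  classical
  induction hN : v p' generalizing v with
  | zero =>
    have := hg _ (hB1 v hv)
    rw [sub_mul, coeff_sub, add_comm v, coeff_X_mul, coeff_X_mul', if_neg] at this
    · simpa using this
    · simp [hN, hp]
  | succ N ih =>
    have := hg _ (hB1 v hv)
    rw [sub_mul, coeff_sub, add_comm v, coeff_X_mul, add_comm _ v, coeff_X_mul', if_pos, 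
      ih _ (hB2 _ (hB1 _ hv))] at this
    · simpa using this
    · simp [hN, hp]
    · simp [hN]

end monomial

/-! ### Powers of the cover ideal of a bipartite graph -/

section graph
variable {n : ℕ} (G : SimpleGraph (Fin n))

/-- The `t`-covers of `G`: exponent vectors with `u_a + u_b ≥ t` on every edge. -/
def coverSet (t : ℕ) : Set (Fin n →₀ ℕ) := {u | ∀ a b, G.Adj a b → t ≤ u a + u b}

theorem isUpperSet_coverSet (t : ℕ) : IsUpperSet (coverSet G t) :=
  fun _ _ huv hu a b hab ↦ (hu a b hab).trans (add_le_add (huv a) (huv b))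

theorem coverIdeal_eq (K : Type*) [Field K] : coverIdeal K G = monIdeal K (coverSet G 1) := by
  ext f
  rw [mem_monIdeal (isUpperSet_coverSet G 1)]
  simp only [coverIdeal, Submodule.mem_iInf]
  have key : ∀ a b : Fin n, f ∈ Ideal.span {X a, X b} ↔ ∀ u ∈ f.support, 1 ≤ u a + u b := by
    intro a b
    rw [← Set.image_pair, mem_ideal_span_X_image]
    refine forall₂_congr fun u _ ↦ ?_
    simp only [Set.mem_insert_iff, Set.mem_singleton_iff, exists_eq_or_imp, exists_eq_left]
    omega
  simp only [key]
  exact ⟨fun h u hu a b hab ↦ h a b hab u hu, fun h a b hab u hu ↦ h u hu a b hab⟩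

/-- For `G` bipartite, with `s` one of the two classes, `J(G) ^ t` is spanned by the monomials of the
`t`-covers. -/
theorem coverIdeal_pow_eq (K : Type*) [Field K] (s : Set (Fin n))
    (hs : ∀ a b, G.Adj a b → (a ∈ s ↔ b ∉ s)) (t : ℕ) :
    coverIdeal K G ^ t = monIdeal K (coverSet G t) := by
  classical
  induction t with
  | zero =>
    rw [pow_zero, Ideal.one_eq_top, eq_comm, Ideal.eq_top_iff_one]
    exact monomial_mem_monIdeal (u := 0) (fun _ _ _ ↦ Nat.zero_le _)
  | succ t ih =>
    rw [pow_succ, ih, coverIdeal_eq]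
    apply le_antisymm
    · refine monIdeal_mul_le fun u hu v hv a b hab ↦ ?_
      have := hu a b hab
      have := hv a b hab
      simp only [Finsupp.add_apply]
      omega
    · refine monIdeal_le fun u hu ↦ ?_
      -- `C` is the vertex cover made of the support of `u` outside `s` and of the vertices of `s`
      -- having a neighbour where `u` vanishes; at the latter, `u ≥ t + 1`.
      let C : Fin n →₀ ℕ := Finsupp.equivFunOnFinite.symm fun a ↦
        if a ∈ s then (if ∃ b, G.Adj a b ∧ u b = 0 then 1 else 0) else (if u a = 0 then 0 else 1)
      have hCs : ∀ a ∈ s, C a = if ∃ b, G.Adj a b ∧ u b = 0 then 1 else 0 := fun a ha ↦ by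
        simp [C, ha]
      have hCn : ∀ a ∉ s, C a = if u a = 0 then 0 else 1 := fun a ha ↦ by
        simp [C, ha]
      have hCu : C ≤ u := by
        intro a
        by_cases ha : a ∈ s
        · rw [hCs a ha]
          split_ifs with h
          · obtain ⟨b, hab, hb⟩ := h
            have := hu a b hab
            omega
          · exact Nat.zero_le _
        · rw [hCn a ha]
          split_ifs <;> omega
      have hC : C ∈ coverSet G 1 := by
        have : ∀ a b, G.Adj a b → a ∈ s → 1 ≤ C a + C b := by
          intro a b hab ha
          rw [hCs a ha, hCn b ((hs a b hab).1 ha)]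
          by_cases hb : u b = 0
          · rw [if_pos ⟨b, hab, hb⟩]; omega
          · simp [hb]
        intro a b hab
        by_cases ha : a ∈ s
        · exact this a b hab ha
        · rw [add_comm]
          exact this b a hab.symm (by have := hs a b hab; tauto)
      have hD : u - C ∈ coverSet G t := by
        have : ∀ a b, G.Adj a b → a ∈ s → t ≤ (u - C) a + (u - C) b := by
          intro a b hab ha
          simp only [Finsupp.tsub_apply]
          rw [hCs a ha, hCn b ((hs a b hab).1 ha)]
          have h1 := hu a b hab
          split_ifs with h h'
          · omega
          · obtain ⟨c, hac, hc⟩ := h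
            have := hu a c hac
            omega
          · omega
          · omega
        intro a b hab
        by_cases ha : a ∈ s
        · exact this a b hab ha
        · rw [add_comm]
          exact this b a hab.symm (by have := hs a b hab; tauto)
      rw [← tsub_add_cancel_of_le hCu, ← mul_one (1 : K), ← monomial_mul]
      exact Ideal.mul_mem_mul (monomial_mem_monIdeal hD) (monomial_mem_monIdeal hC)

open Classical in
/-- The least exponent at `a` that satisfies the `t`-cover condition on all edges at `a`, given the
exponents `v` of the neighbours: the maximum of the truncated differences `t - v b` over the
neighbours `b` of `a`, and `0` if there are none. -/
noncomputable def need (t : ℕ) (a : Fin n) (v : Fin n →₀ ℕ) : ℕ :=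
  (Finset.univ.filter (G.Adj a)).sup fun b ↦ t - v b

theorem need_le_iff {t : ℕ} {a : Fin n} {v : Fin n →₀ ℕ} {x : ℕ} :
    need G t a v ≤ x ↔ ∀ b, G.Adj a b → t ≤ x + v b := by
  simp [need, Finset.sup_le_iff]

theorem le_need {t : ℕ} {a b : Fin n} (hab : G.Adj a b) (v : Fin n →₀ ℕ) :
    t ≤ need G t a v + v b := (need_le_iff G).1 le_rfl b hab

theorem need_anti {t : ℕ} {a : Fin n} {u v : Fin n →₀ ℕ} (h : ∀ b, G.Adj a b → u b ≤ v b) :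
    need G t a v ≤ need G t a u :=
  (need_le_iff G).2 fun b hb ↦ (le_need G hb u).trans (by have := h b hb; omega)

theorem need_congr {t : ℕ} {a : Fin n} {u v : Fin n →₀ ℕ} (h : ∀ b, G.Adj a b → u b = v b) :
    need G t a v = need G t a u :=
  le_antisymm (need_anti G fun b hb ↦ (h b hb).le) (need_anti G fun b hb ↦ (h b hb).ge)

end graph

/-! ### Merging the even variables of a path -/

section path
variable (m : ℕ)

/-- The even vertex `2i` of the path on `0, …, 2m`. It is meaningful for `i ≤ m`; `Fin.ofNat` reduces
larger values modulo `2m + 1`. -/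
def ev (i : ℕ) : Fin (2 * m + 1) := Fin.ofNat _ (2 * i)

variable {m}

theorem ev_val {i : ℕ} (hi : i ≤ m) : (ev m i : ℕ) = 2 * i := by
  rw [ev, Fin.val_ofNat]; exact Nat.mod_eq_of_lt (by omega)

theorem eq_ev {a : Fin (2 * m + 1)} (ha : Even (a : ℕ)) : ∃ i ≤ m, a = ev m i := by
  obtain ⟨i, hi⟩ := ha
  have := a.2
  exact ⟨i, by omega, Fin.ext (by rw [ev_val (by omega)]; omega)⟩

theorem path_adj {a b : Fin (2 * m + 1)} (h : (SimpleGraph.pathGraph _).Adj a b) :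
    (a : ℕ) + 1 = b ∨ (b : ℕ) + 1 = a := SimpleGraph.pathGraph_adj.1 h

theorem path_adj_even {a b : Fin (2 * m + 1)} (h : (SimpleGraph.pathGraph _).Adj a b) :
    Even (a : ℕ) ↔ ¬ Even (b : ℕ) := by
  rcases path_adj h with h | h <;> rw [← h, Nat.even_add_one]
  simp

/-- The map on vertices sending `0, 2, …, 2i` to `2i` and fixing all others. -/
def mergeEven (i : ℕ) (a : Fin (2 * m + 1)) : Fin (2 * m + 1) :=
  if Even (a : ℕ) ∧ (a : ℕ) ≤ 2 * i then ev m i else a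

/-- `need` for the path on `0, …, 2m`. -/
noncomputable abbrev pneed (t : ℕ) (a : Fin (2 * m + 1)) (v : Fin (2 * m + 1) →₀ ℕ) : ℕ :=
  need (SimpleGraph.pathGraph (2 * m + 1)) t a v

/-- The even vertices `0, 2, …, 2i`. -/
def evensUpTo (m i : ℕ) : Finset (Fin (2 * m + 1)) :=
  Finset.univ.filter fun a ↦ Even (a : ℕ) ∧ (a : ℕ) ≤ 2 * i

/-- The exponents of the monomial ideal that `J(P_n) ^ t` generates after the variables at
`0, 2, …, 2i` are all replaced by the one at `2i`. The exponents at `0, 2, …, 2i - 2` are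
unconstrained. -/
def mergedSet (m t i : ℕ) : Set (Fin (2 * m + 1) →₀ ℕ) :=
  {v | ∑ a ∈ evensUpTo m i, pneed t a v ≤ v (ev m i) ∧
    ∀ a : Fin (2 * m + 1), Even (a : ℕ) → 2 * i < a → pneed t a v ≤ v a}

theorem isUpperSet_mergedSet (t i : ℕ) : IsUpperSet (mergedSet m t i) := by
  intro u v huv hu
  have h : ∀ a, pneed t a v ≤ pneed t a u := fun a ↦ need_anti _ fun b _ ↦ huv b
  exact ⟨(Finset.sum_le_sum fun a _ ↦ h a).trans (hu.1.trans (huv _)),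
    fun a ha hia ↦ (h a).trans ((hu.2 a ha hia).trans (huv a))⟩

theorem pneed_congr {t : ℕ} {a : Fin (2 * m + 1)} (ha : Even (a : ℕ))
    {u v : Fin (2 * m + 1) →₀ ℕ} (h : ∀ b : Fin (2 * m + 1), ¬ Even (b : ℕ) → u b = v b) :
    pneed t a v = pneed t a u :=
  need_congr _ fun b hb ↦ h b ((path_adj_even hb).1 ha)

theorem mapDomain_eq_sum {σ : Type*} [Fintype σ] [DecidableEq σ] (ρ : σ → σ) (u : σ →₀ ℕ) (b : σ) :
    Finsupp.mapDomain ρ u b = ∑ a with ρ a = b, u a := by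
  rw [Finsupp.mapDomain, Finsupp.sum_fintype _ _ (by simp), Finsupp.finsetSum_apply,
    Finset.sum_filter]
  simp [Finsupp.single_apply]

theorem mapDomain_merge_of_not {i : ℕ} (hi : i ≤ m) (u : Fin (2 * m + 1) →₀ ℕ)
    {b : Fin (2 * m + 1)} (hb : ¬ (Even (b : ℕ) ∧ (b : ℕ) ≤ 2 * i)) :
    Finsupp.mapDomain (mergeEven i) u b = u b := by
  rw [mapDomain_eq_sum]
  have : (Finset.univ.filter fun a : Fin (2 * m + 1) ↦ mergeEven i a = b) = {b} := by
    ext a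
    simp only [Finset.mem_filter, Finset.mem_univ, true_and, Finset.mem_singleton]
    rw [mergeEven]
    constructor
    · intro h
      split_ifs at h with h'
      · exact absurd (by rw [← h, ev_val hi]; simp) hb
      · exact h
    · rintro rfl
      rw [if_neg hb]
  rw [this, Finset.sum_singleton]

theorem mapDomain_merge_ev {i : ℕ} (hi : i ≤ m) (u : Fin (2 * m + 1) →₀ ℕ) :
    Finsupp.mapDomain (mergeEven i) u (ev m i) = ∑ a ∈ evensUpTo m i, u a := by
  rw [mapDomain_eq_sum]
  congr 1
  ext a
  simp only [Finset.mem_filter, Finset.mem_univ, true_and, evensUpTo]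
  rw [mergeEven]
  constructor
  · intro h
    split_ifs at h with h'
    · exact h'
    · rw [h, ev_val hi]; simp
  · intro h
    rw [if_pos h]

theorem mapDomain_merge_eq_zero {i : ℕ} (hi : i ≤ m) (u : Fin (2 * m + 1) →₀ ℕ)
    {b : Fin (2 * m + 1)} (hb : (b : ℕ) < 2 * i) (hb' : Even (b : ℕ)) :
    Finsupp.mapDomain (mergeEven i) u b = 0 := by
  rw [mapDomain_eq_sum]
  refine Finset.sum_eq_zero fun a ha ↦ ?_
  simp only [Finset.mem_filter, Finset.mem_univ, true_and] at ha
  rw [mergeEven] at ha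
  split_ifs at ha with h
  · rw [← ha, ev_val hi] at hb; omega
  · subst ha; exact absurd ⟨hb', hb.le⟩ h

theorem mapDomain_mem {t i : ℕ} (hi : i ≤ m) {u : Fin (2 * m + 1) →₀ ℕ}
    (hu : u ∈ coverSet (SimpleGraph.pathGraph (2 * m + 1)) t) :
    Finsupp.mapDomain (mergeEven i) u ∈ mergedSet m t i := by
  have hodd : ∀ b : Fin (2 * m + 1), ¬ Even (b : ℕ) →
      u b = Finsupp.mapDomain (mergeEven i) u b :=
    fun b hb ↦ (mapDomain_merge_of_not hi u fun h ↦ hb h.1).symm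
  have hle : ∀ a, pneed t a u ≤ u a := fun a ↦ (need_le_iff _).2 fun b hab ↦ hu a b hab
  constructor
  · rw [mapDomain_merge_ev hi]
    refine Finset.sum_le_sum fun a ha ↦ ?_
    rw [pneed_congr (Finset.mem_filter.1 ha).2.1 hodd]
    exact hle a
  · intro a ha hia
    rw [pneed_congr ha hodd, mapDomain_merge_of_not hi u (by omega)]
    exact hle a

variable (K : Type*) [Field K]

/-- The sequence `x_0 - x_2, x_2 - x_4, …, x_{2m-2} - x_{2m}`. -/
noncomputable def diffs (m : ℕ) : List (MvPolynomial (Fin (2 * m + 1)) K) :=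
  (List.range m).map fun i ↦ X (ev m i) - X (ev m (i + 1))

theorem ofList_take_diffs {i : ℕ} (hi : i ≤ m) : Ideal.ofList ((diffs K m).take i) =
    Ideal.span ((fun j ↦ X (ev m j) - X (ev m (j + 1))) '' Set.Iio i) := by
  rw [Ideal.ofList, diffs, ← List.map_take, List.take_range, min_eq_left hi]
  congr 1
  ext
  simp

/-- The ideal generated by the first `i` differences. -/
noncomputable abbrev diffIdeal (m i : ℕ) : Ideal (MvPolynomial (Fin (2 * m + 1)) K) :=
  Ideal.ofList ((diffs K m).take i)

theorem X_sub_mem {i j : ℕ} (hi : i ≤ m) (hj : j ≤ i) :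
    (X (ev m j) - X (ev m i) : MvPolynomial _ K) ∈ diffIdeal K m i := by
  have hD : diffIdeal K m i = _ := ofList_take_diffs K hi
  have : ∀ l, j ≤ l → l ≤ i → (X (ev m j) - X (ev m l) : MvPolynomial _ K) ∈ diffIdeal K m i := by
    intro l hl
    induction l, hl using Nat.le_induction with
    | base => intro _; simp
    | succ l hl ih =>
      intro h
      rw [← sub_add_sub_cancel _ (X (ev m l))]
      refine add_mem (ih (by omega)) ?_
      rw [hD]
      exact Ideal.subset_span ⟨l, h, rfl⟩
  exact this i hj le_rfl

theorem sub_rename_mem {i : ℕ} (hi : i ≤ m) (f : MvPolynomial (Fin (2 * m + 1)) K) :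
    f - rename (mergeEven i) f ∈ diffIdeal K m i := by
  have : Ideal.Quotient.mkₐ K (diffIdeal K m i) =
      (Ideal.Quotient.mkₐ K (diffIdeal K m i)).comp (rename (mergeEven i)) := by
    apply MvPolynomial.algHom_ext
    intro a
    rw [AlgHom.comp_apply, rename_X, Ideal.Quotient.mkₐ_eq_mk, Ideal.Quotient.eq, mergeEven]
    split_ifs with h
    · obtain ⟨j, hj, rfl⟩ := eq_ev h.1
      rw [ev_val hj] at h
      exact X_sub_mem K hi (by omega)
    · simp
  have := DFunLike.congr_fun this f
  rwa [AlgHom.comp_apply, Ideal.Quotient.mkₐ_eq_mk, Ideal.Quotient.eq] at this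

theorem rename_eq_zero {i : ℕ} (hi : i ≤ m) {f : MvPolynomial (Fin (2 * m + 1)) K}
    (hf : f ∈ diffIdeal K m i) : rename (mergeEven i) f = 0 := by
  have : diffIdeal K m i ≤ RingHom.ker (rename (R := K) (mergeEven (m := m) i)) := by
    rw [show diffIdeal K m i = _ from ofList_take_diffs K hi, Ideal.span_le]
    rintro _ ⟨j, hj, rfl⟩
    have hj : j < i := hj
    have h1 : mergeEven i (ev m j) = ev m i := by
      rw [mergeEven, if_pos]; rw [ev_val (by omega)]; constructor
      · simp
      · omega
    have h2 : mergeEven i (ev m (j + 1)) = ev m i := by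
      rw [mergeEven, if_pos]; rw [ev_val (by omega)]; constructor
      · simp
      · omega
    simp [h1, h2]
  exact this hf

/-- Every monomial of `mergedSet m t i` is a multiple of the image under merging of a `t`-cover `x^u`,
and `x^u` is congruent to its image modulo the differences. -/
theorem merged_le {t i : ℕ} (hi : i ≤ m) : monIdeal K (mergedSet m t i) ≤
    monIdeal K (coverSet (SimpleGraph.pathGraph (2 * m + 1)) t) ⊔ diffIdeal K m i := by
  refine monIdeal_le fun v hv ↦ ?_
  let u : Fin (2 * m + 1) →₀ ℕ := Finsupp.equivFunOnFinite.symm fun a ↦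
    if Even (a : ℕ) then pneed t a v else v a
  have hue : ∀ a : Fin (2 * m + 1), Even (a : ℕ) → u a = pneed t a v := fun a ha ↦ by simp [u, ha]
  have huo : ∀ a : Fin (2 * m + 1), ¬ Even (a : ℕ) → u a = v a := fun a ha ↦ by simp [u, ha]
  have hu : u ∈ coverSet (SimpleGraph.pathGraph (2 * m + 1)) t := by
    have : ∀ a b : Fin (2 * m + 1), (SimpleGraph.pathGraph _).Adj a b → Even (a : ℕ) →
        t ≤ u a + u b := by
      intro a b hab ha
      rw [hue a ha, huo b ((path_adj_even hab).1 ha)]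
      exact le_need _ hab v
    intro a b hab
    by_cases ha : Even (a : ℕ)
    · exact this a b hab ha
    · rw [add_comm]
      exact this b a hab.symm (by have := path_adj_even hab; tauto)
  have hle : Finsupp.mapDomain (mergeEven i) u ≤ v := by
    intro b
    by_cases hb : Even (b : ℕ)
    · rcases lt_trichotomy (b : ℕ) (2 * i) with h | h | h
      · rw [mapDomain_merge_eq_zero hi u h hb]; exact Nat.zero_le _
      · obtain rfl : b = ev m i := Fin.ext (by rw [ev_val hi, h])
        rw [mapDomain_merge_ev hi]
        refine le_trans (Finset.sum_le_sum fun a ha ↦ ?_) hv.1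
        exact (hue a (Finset.mem_filter.1 ha).2.1).le
      · rw [mapDomain_merge_of_not hi u (by omega), hue b hb]
        exact hv.2 b hb h
    · rw [mapDomain_merge_of_not hi u (fun h ↦ hb h.1), huo b hb]
  rw [← tsub_add_cancel_of_le hle, ← mul_one (1 : K), ← monomial_mul, ← rename_monomial]
  refine Ideal.mul_mem_left _ _ ?_
  rw [← sub_sub_self (monomial u (1 : K)) (rename _ _)]
  exact sub_mem (Ideal.mem_sup_left (monomial_mem_monIdeal hu))
    (Ideal.mem_sup_right (sub_rename_mem K hi _))

/-- Working modulo the first `i` differences amounts to merging `x_0, x_2, …, x_{2i}`. -/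
theorem mem_sup_iff {t i : ℕ} (hi : i ≤ m) (f : MvPolynomial (Fin (2 * m + 1)) K) :
    f ∈ monIdeal K (coverSet (SimpleGraph.pathGraph (2 * m + 1)) t) ⊔ diffIdeal K m i ↔
      rename (mergeEven i) f ∈ monIdeal K (mergedSet m t i) := by
  constructor
  · intro h
    obtain ⟨g, hg, d, hd, rfl⟩ := Submodule.mem_sup.1 h
    rw [map_add, rename_eq_zero K hi hd, add_zero]
    have : monIdeal K (coverSet (SimpleGraph.pathGraph (2 * m + 1)) t) ≤
        (monIdeal K (mergedSet m t i)).comap (rename (mergeEven i)) := by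
      refine monIdeal_le fun u hu ↦ ?_
      rw [Ideal.mem_comap, rename_monomial]
      exact monomial_mem_monIdeal (mapDomain_mem hi hu)
    exact this hg
  · intro h
    rw [← sub_add_cancel f (rename (mergeEven i) f)]
    exact add_mem (Ideal.mem_sup_right (sub_rename_mem K hi f)) (merged_le K hi h)

/-- The next difference is a nonzerodivisor modulo the merged ideal. An exponent outside
`mergedSet m t i` violates one of its inequalities, at some even vertex `r`; as `r` differs from
one of the two vertices in the difference, the set of exponents violating the inequality at `r` is
stable as `coeff_eq_zero_of_sub_mul` requires. -/
theorem mul_mem_merged {t i : ℕ} (hi : i < m) {g : MvPolynomial (Fin (2 * m + 1)) K}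
    (hg : (X (ev m i) - X (ev m (i + 1))) * g ∈ monIdeal K (mergedSet m t i)) :
    g ∈ monIdeal K (mergedSet m t i) := by
  classical
  have hup := isUpperSet_mergedSet (m := m) t i
  rw [mem_monIdeal hup] at hg ⊢
  have hcoeff : ∀ v ∉ mergedSet m t i,
      coeff v ((X (ev m i) - X (ev m (i + 1))) * g) = 0 := fun v hv ↦ by
    by_contra h
    exact hv (hg v (mem_support_iff.2 h))
  have hne : ev m i ≠ ev m (i + 1) := fun h ↦ by
    have := congrArg Fin.val h
    rw [ev_val (by omega), ev_val (by omega)] at this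
    omega
  have hev : ∀ j ≤ m, ∀ b : Fin (2 * m + 1), ¬ Even (b : ℕ) → Finsupp.single (ev m j) 1 b = 0 := by
    intro j hj b hb
    rw [Finsupp.single_apply, if_neg]
    rintro rfl
    rw [ev_val hj] at hb
    simp at hb
  have hadd : ∀ j ≤ m, ∀ (v : Fin (2 * m + 1) →₀ ℕ) (a : Fin (2 * m + 1)), Even (a : ℕ) →
      pneed t a (v + Finsupp.single (ev m j) 1) = pneed t a v :=
    fun j hj v a ha ↦ pneed_congr ha fun b hb ↦ by simp [hev j hj b hb]
  have hsub : ∀ j ≤ m, ∀ (v : Fin (2 * m + 1) →₀ ℕ) (a : Fin (2 * m + 1)), Even (a : ℕ) →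
      pneed t a (v - Finsupp.single (ev m j) 1) = pneed t a v :=
    fun j hj v a ha ↦ pneed_congr ha fun b hb ↦ by simp [hev j hj b hb]
  have hsum : ∀ (u v : Fin (2 * m + 1) →₀ ℕ), (∀ a : Fin (2 * m + 1), Even (a : ℕ) →
      pneed t a u = pneed t a v) →
      ∑ a ∈ evensUpTo m i, pneed t a u = ∑ a ∈ evensUpTo m i, pneed t a v :=
    fun u v h ↦ Finset.sum_congr rfl fun a ha ↦ h a (Finset.mem_filter.1 ha).2.1
  intro v hv
  rw [mem_support_iff] at hv
  by_contra hbad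
  apply hv
  by_cases h1 : ∑ a ∈ evensUpTo m i, pneed t a v ≤ v (ev m i)
  · obtain ⟨r, hr, hir, hrv⟩ : ∃ r : Fin (2 * m + 1), Even (r : ℕ) ∧ 2 * i < r ∧
        v r < pneed t r v := by
      by_contra! h
      exact hbad ⟨h1, h⟩
    have hrp : ev m i ≠ r := by
      rintro rfl
      rw [ev_val hi.le] at hir
      omega
    refine coeff_eq_zero_of_sub_mul hne (B := {v | v r < pneed t r v}) ?_ ?_ ?_ v hrv
    · intro v hv
      simp only [Set.mem_ofPred_eq] at hv ⊢
      rw [hadd i hi.le v r hr]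
      simpa [Finsupp.single_apply, hrp] using hv
    · intro v hv
      simp only [Set.mem_ofPred_eq] at hv ⊢
      rw [hsub (i + 1) hi v r hr]
      exact lt_of_le_of_lt (by simp) hv
    · intro v hv
      exact hcoeff v fun h ↦ (not_le.2 hv) (h.2 r hr hir)
  -- The inequality at `2i` fails: the two variables exchange roles, the difference changes sign.
  · refine coeff_eq_zero_of_sub_mul hne.symm
      (B := {v | v (ev m i) < ∑ a ∈ evensUpTo m i, pneed t a v}) ?_ ?_ ?_ v (not_le.1 h1)
    · intro v hv
      simp only [Set.mem_ofPred_eq] at hv ⊢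
      rw [hsum _ v (hadd (i + 1) hi v)]
      simpa [Finsupp.single_apply, hne.symm] using hv
    · intro v hv
      simp only [Set.mem_ofPred_eq] at hv ⊢
      rw [hsum _ v (hsub i hi.le v)]
      exact lt_of_le_of_lt (by simp) hv
    · intro v hv
      rw [← neg_sub, neg_mul, coeff_neg, hcoeff v fun h ↦ (not_le.2 hv) h.1, neg_zero]

theorem diffs_isWeaklyRegular (t : ℕ) : RingTheory.Sequence.IsWeaklyRegular
    (MvPolynomial (Fin (2 * m + 1)) K ⧸
      monIdeal K (coverSet (SimpleGraph.pathGraph (2 * m + 1)) t)) (diffs K m) := by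
  refine isWeaklyRegular_quotient _ _ fun i hi f hf ↦ ?_
  have him : i < m := by simpa [diffs] using hi
  rw [mem_sup_iff K him.le] at hf ⊢
  apply mul_mem_merged K him
  have h1 : mergeEven i (ev m i) = ev m i := by simp [mergeEven]
  have h2 : mergeEven i (ev m (i + 1)) = ev m (i + 1) := by
    rw [mergeEven, if_neg]
    rw [ev_val (by omega)]
    omega
  simpa [diffs, h1, h2] using hf


/-! ### The socle element -/

/-- The exponent vector with value `|j - k|` at the odd vertex `2j + 1`, `0 ≤ j ≤ 2k`, and `0` at the
even ones. The absolute value is a sum of two truncated differences, and `j` is `a / 2`. -/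
noncomputable def valley (k : ℕ) : Fin (2 * (2 * k + 1) + 1) →₀ ℕ :=
  Finsupp.equivFunOnFinite.symm fun a ↦
    if Even (a : ℕ) then 0 else ((a : ℕ) / 2 - k) + (k - (a : ℕ) / 2)

/-- Raising the exponent at an odd vertex `b` strictly lowers the sum of the `c_a`. The term that drops
belongs to the neighbour `a` of `b` pointing away from the centre `2k + 1` (at the centre, the left
one): the other neighbour of `a`, if any, has a larger exponent than `b`, so `b` alone attains
the maximum `c_a = t - v_b`, which is positive because `v_b ≤ k < t`. -/
theorem sum_pneed_lt {k t : ℕ} (ht : k + 1 ≤ t) {v : Fin (2 * (2 * k + 1) + 1) →₀ ℕ}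
    (hv : ∀ b : Fin (2 * (2 * k + 1) + 1), ¬ Even (b : ℕ) → v b = valley k b)
    {b : Fin (2 * (2 * k + 1) + 1)} (hb : ¬ Even (b : ℕ)) :
    ∑ a ∈ evensUpTo (2 * k + 1) (2 * k + 1), pneed t a (v + Finsupp.single b 1) <
      ∑ a ∈ evensUpTo (2 * k + 1) (2 * k + 1), pneed t a v := by
  have hodd : ∀ c : Fin (2 * (2 * k + 1) + 1), ¬ Even (c : ℕ) →
      v c = ((c : ℕ) / 2 - k) + (k - (c : ℕ) / 2) := fun c hc ↦ by
    rw [hv c hc]; simp [valley, hc]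
  have hb2 := b.2
  have hbe := Nat.even_iff.not.1 hb
  obtain ⟨a, ha, hab⟩ : ∃ a : Fin (2 * (2 * k + 1) + 1), Even (a : ℕ) ∧
      (((b : ℕ) / 2 ≤ k ∧ (a : ℕ) + 1 = b) ∨ (k < (b : ℕ) / 2 ∧ (b : ℕ) + 1 = a)) := by
    rcases le_or_gt ((b : ℕ) / 2) k with h | h
    · exact ⟨⟨b - 1, by omega⟩, by rw [Nat.even_iff]; simp only; omega,
        Or.inl ⟨h, by simp only; omega⟩⟩
    · exact ⟨⟨b + 1, by omega⟩, by rw [Nat.even_iff]; simp only; omega,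
        Or.inr ⟨h, rfl⟩⟩
  have hadj : (SimpleGraph.pathGraph (2 * (2 * k + 1) + 1)).Adj a b := by
    rw [SimpleGraph.pathGraph_adj]; omega
  have ha2 := a.2
  refine Finset.sum_lt_sum (fun a _ ↦ need_anti _ fun c _ ↦ by simp)
    ⟨a, Finset.mem_filter.2 ⟨Finset.mem_univ _, ha, by omega⟩, ?_⟩
  have h1 := le_need (t := t) _ hadj v
  have h2 : pneed t a (v + Finsupp.single b 1) ≤ t - v b - 1 := by
    rw [need_le_iff]
    intro c hac
    have hc := (path_adj_even hac).1 ha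
    have hce := Nat.even_iff.not.1 hc
    by_cases hcb : c = b
    · subst hcb
      simp only [Finsupp.add_apply, Finsupp.single_eq_same]
      omega
    · have hcb' : (c : ℕ) ≠ b := fun h ↦ hcb (Fin.ext h)
      have := path_adj hac
      simp only [Finsupp.add_apply]
      rw [hodd c hc, hodd b hb]
      omega
  have h3 : v b < t := by
    rw [hodd b hb]
    omega
  unfold pneed at h2 ⊢
  omega

/-- After dividing out all differences, the quotient has a nonzero element killed by the maximal
homogeneous ideal. -/
theorem exists_socle {k t : ℕ} (ht : k + 1 ≤ t) :
    ∃ w : MvPolynomial (Fin (2 * (2 * k + 1) + 1)) K,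
      w ∉ monIdeal K (coverSet (SimpleGraph.pathGraph (2 * (2 * k + 1) + 1)) t) ⊔
        diffIdeal K (2 * k + 1) (2 * k + 1) ∧
      ∀ r ∈ maxIdeal K (2 * (2 * k + 1) + 1), r * w ∈
        monIdeal K (coverSet (SimpleGraph.pathGraph (2 * (2 * k + 1) + 1)) t) ⊔
          diffIdeal K (2 * k + 1) (2 * k + 1) := by
  classical
  set m := 2 * k + 1 with hm
  let N := ∑ a ∈ evensUpTo m m, pneed t a (valley k)
  have hlast : Even (ev m m : ℕ) := by rw [ev_val le_rfl]; simp
  let v : Fin (2 * m + 1) →₀ ℕ := valley k + Finsupp.single (ev m m) (N - 1)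
  have hvo : ∀ b : Fin (2 * m + 1), ¬ Even (b : ℕ) → v b = valley k b := by
    intro b hb
    have : ev m m ≠ b := by rintro rfl; exact hb hlast
    simp [v, this]
  have hve : v (ev m m) = N - 1 := by
    have : valley k (ev m m) = 0 := by
      simp only [valley, Finsupp.equivFunOnFinite_symm_apply_apply]
      rw [if_pos hlast]
    simp [v, this]
  have hsum : ∑ a ∈ evensUpTo m m, pneed t a v = N :=
    Finset.sum_congr rfl fun a ha ↦
      (pneed_congr (Finset.mem_filter.1 ha).2.1 fun b hb ↦ (hvo b hb).symm)
  have hN : 0 < N := by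
    rw [← hsum]
    refine lt_of_le_of_lt (Nat.zero_le _)
      (sum_pneed_lt ht hvo (b := ⟨1, by omega⟩) (by simp))
  have hmerge : ∀ a : Fin (2 * m + 1), Even (a : ℕ) → mergeEven m a = ev m m := fun a ha ↦ by
    rw [mergeEven, if_pos ⟨ha, by have := a.2; omega⟩]
  have hmerge' : ∀ a : Fin (2 * m + 1), ¬ Even (a : ℕ) → mergeEven m a = a := fun a ha ↦ by
    rw [mergeEven, if_neg fun h ↦ ha h.1]
  have hfix : Finsupp.mapDomain (mergeEven m) v = v := by
    rw [← Finsupp.mapDomain_id (v := v), ← Finsupp.mapDomain_comp]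
    refine Finsupp.mapDomain_congr fun a ha ↦ ?_
    by_cases h : Even (a : ℕ)
    · by_contra hne
      have hne' : ev m m ≠ a := fun h' ↦ hne (by simp [hmerge a h, h'])
      refine Finsupp.mem_support_iff.1 ha ?_
      simp [v, valley, h, hne']
    · exact hmerge' a h
  have hup := isUpperSet_mergedSet (m := m) t m
  refine ⟨monomial v 1, ?_, ?_⟩
  · rw [mem_sup_iff K le_rfl, rename_monomial, hfix, mem_monIdeal hup]
    intro h
    have := (h v (by simp)).1
    rw [hsum, hve] at this
    omega
  · have hX : ∀ b : Fin (2 * m + 1), X b * monomial v 1 ∈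
        monIdeal K (coverSet (SimpleGraph.pathGraph (2 * m + 1)) t) ⊔ diffIdeal K m m := by
      intro b
      rw [mem_sup_iff K le_rfl, map_mul, rename_X, rename_monomial, hfix, X, monomial_mul, one_mul,
        add_comm (Finsupp.single _ _) v]
      refine monomial_mem_monIdeal ⟨?_, fun a _ ha ↦ by have := a.2; omega⟩
      by_cases hb : Even (b : ℕ)
      · rw [hmerge b hb, Finsupp.add_apply, hve, Finsupp.single_eq_same]
        refine (Finset.sum_le_sum fun a _ ↦ need_anti _ (v := _) (u := v) fun c _ ↦ by simp).trans ?_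
        rw [hsum]
        omega
      · rw [hmerge' b hb]
        have := sum_pneed_lt ht hvo hb
        rw [hsum] at this
        have h2 : v (ev m m) ≤ (v + Finsupp.single b 1 : Fin (2 * m + 1) →₀ ℕ) (ev m m) := by simp
        exact (Nat.le_sub_one_of_lt this).trans (hve.symm.le.trans h2)
    intro r hr
    have hle : maxIdeal K (2 * m + 1) ≤
        (monIdeal K (coverSet (SimpleGraph.pathGraph (2 * m + 1)) t) ⊔
          diffIdeal K m m).colon {monomial v 1} := by
      rw [maxIdeal, Ideal.span_le]
      rintro _ ⟨b, rfl⟩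
      exact Submodule.mem_colon_singleton.2 (hX b)
    exact Submodule.mem_colon_singleton.1 (hle hr)

end path

/-! ### The depth -/

/-- For the odd path `P_n` with `n = 4k + 3` (`k ≥ 0`) and every `t ≥ k + 1`,
`depth(R/J(P_n)^t) = 2k + 1`. -/
theorem depth_coverIdeal_pow_odd_path_three_stable (K : Type*) [Field K] (k n t : ℕ)
    (hn : n = 4 * k + 3) (ht : k + 1 ≤ t) :
    depthQuot K n ((coverIdeal K (SimpleGraph.pathGraph n)) ^ t) = 2 * k + 1 := by
  obtain rfl : n = 2 * (2 * k + 1) + 1 := by omega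
  rw [coverIdeal_pow_eq _ K {a | Even (a : ℕ)} fun a b hab ↦ path_adj_even hab]
  have hreg := diffs_isWeaklyRegular (m := 2 * k + 1) K t
  have hlen : (diffs K (2 * k + 1)).length = 2 * k + 1 := by simp [diffs]
  have htake : diffIdeal K (2 * k + 1) (2 * k + 1) = Ideal.ofList (diffs K (2 * k + 1)) := by
    rw [diffIdeal, List.take_of_length_le hlen.le]
  obtain ⟨w, hw, hsoc⟩ := exists_socle K ht
  rw [htake] at hw hsoc
  refine IsGreatest.csSup_eq ⟨⟨diffs K (2 * k + 1), hlen, ?_, hreg, ?_⟩, ?_⟩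
  · intro r hr
    obtain ⟨i, -, rfl⟩ := List.mem_map.1 hr
    exact sub_mem (Ideal.subset_span ⟨_, rfl⟩) (Ideal.subset_span ⟨_, rfl⟩)
  · intro htop
    exact hw ((mk_mem_smul_top _ _ _).1 (htop ▸ Submodule.mem_top))
  · rintro _ ⟨rs, rfl, hmem, hrs⟩
    exact (length_le_of_socle _ _ _ rs hreg w hw hsoc hmem hrs).trans hlen.le
end

section
/- Let K be a field, k ≥ 1 an integer, n = 4k + 1, R = K[x_1,…,x_n], and let J(P_n) be the cover ideal of the path graph P_n. Then for every integer t with 1 ≤ t ≤ k − 1, depth(R/J(P_n)^t) = 2k + ⌊2k/(2t + 1)⌋. -/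
/-!
The depth of `R/I` is handled through the vanishing of `Ext^i(R/m, R/I)`, which by Rees' theorem
(`sSup_regular_eq`) governs the length of maximal regular sequences. For monomial ideals the main
tool is the sequence `0 → R/(I : x^b) → R/I → R/(I + x^b) → 0` and its consequences
(`DepthGE.mid`, `DepthGE.right`, `DepthGE.left`), together with one Mayer-Vietoris sequence
(`DepthGE.union`).

Since the path is bipartite, the powers of its cover ideal are the symbolic powers
(`coverIdeal_path_pow`): `J^t` is spanned by the monomials `x^a` with `a_i + a_{i+1} ≥ t` for all
`i`. Such ideals are studied with arbitrary weights `w i` in place of `t` (`IW`), a class closed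
under colons by variables: a colon by `x_v` lowers the weights of the two edges at `v` by one
(`IW_colon`). The depth of the sum with `x_v` is bounded below through the weighted ideal in which
the edges at `v` are deleted and the weights of the edges next to them are lowered
(`depthGE_sum`).

Take the weights `c, t, …, t` on a path with `L` edges. Colons with the second vertex lower `c` to
zero, and each of the sums met on the way has weights `c', t, …, t` with `c' < c` on a path with
`L - 2` edges. Induction on `L` gives `depth ≥ n - 1 - s` as soon as `c + e t ≤ s`, where
`L = 2 s + 1 + e` (`low_PW`). For the upper bound, colons with the second and the third vertex lead
from `c, t, t, …` to `1, 0, c - 1, t, …`, and the lower bound for the sums shows that a depth of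
`n - s` or more would persist along the way. This splits off an isolated edge of weight one. When
also `s ≤ c + e t`, where `L + 1 = 2 s + e`, repeating this `s` times leaves the intersection of `s`
ideals `(x_j, x_{j+1})` in disjoint pairs of variables, whose quotient has depth `n - 1 - s`
(`low_update`, `up_update`, `not_depthGE_PW`). With `c = t`, `L = 4 k` and
`s = 2 k - ⌊2 k / (2 t + 1)⌋` both numerical conditions hold.
-/

open MvPolynomial

namespace CoverPath

open CategoryTheory CategoryTheory.Abelian

universe u

/-! ### Depth through Ext -/

section ExtDepth

variable {R : Type u} [CommRing R]

/-- `ExtVanish m d M` says that `Ext^i(R/m, M) = 0` for all `i < d`; by Rees' theorem this is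
`depth_m M ≥ d` for `M` finitely generated over a Noetherian ring with `mM ≠ M`. -/
def ExtVanish (m : Ideal R) (d : ℕ) (M : ModuleCat.{u} R) : Prop :=
  ∀ i < d, Subsingleton (Ext (ModuleCat.of R (R ⧸ m)) M i)

lemma ExtVanish.mono {m : Ideal R} {d e : ℕ} {M : ModuleCat.{u} R} (h : ExtVanish m d M)
    (hde : e ≤ d) : ExtVanish m e M := fun i hi => h i (by omega)

lemma ExtVanish.mid {m : Ideal R} {d : ℕ} {S : ShortComplex (ModuleCat.{u} R)}
    (hS : S.ShortExact) (h1 : ExtVanish m d S.X₁) (h3 : ExtVanish m d S.X₃) :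
    ExtVanish m d S.X₂ := by
  intro i hi
  have := h1 i hi
  have := h3 i hi
  refine subsingleton_of_forall_eq 0 fun x => ?_
  obtain ⟨y, rfl⟩ := Ext.covariant_sequence_exact₂ _ hS x (Subsingleton.elim _ _)
  rw [Subsingleton.elim y 0, Ext.zero_comp]

lemma ExtVanish.right {m : Ideal R} {d : ℕ} {S : ShortComplex (ModuleCat.{u} R)}
    (hS : S.ShortExact) (h1 : ExtVanish m (d + 1) S.X₁) (h2 : ExtVanish m d S.X₂) :
    ExtVanish m d S.X₃ := by
  intro i hi
  have := h1 (i + 1) (by omega)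
  have := h2 i hi
  refine subsingleton_of_forall_eq 0 fun x => ?_
  obtain ⟨y, rfl⟩ := Ext.covariant_sequence_exact₃ _ hS x rfl (Subsingleton.elim _ _)
  rw [Subsingleton.elim y 0, Ext.zero_comp]

/-- The depth of the left term, when the first map of the sequence induces zero on the relevant
`Ext` groups. -/
lemma ExtVanish.left_of_zero {m : Ideal R} {d : ℕ} {S : ShortComplex (ModuleCat.{u} R)}
    (hS : S.ShortExact)
    (h0 : ∀ i < d + 1, ∀ x : Ext (ModuleCat.of R (R ⧸ m)) S.X₁ i,
      x.comp (Ext.mk₀ S.f) (add_zero i) = 0)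
    (h3 : ExtVanish m d S.X₃) : ExtVanish m (d + 1) S.X₁ := by
  intro i hi
  refine subsingleton_of_forall_eq 0 fun x => ?_
  cases i with
  | zero =>
    have := hS.mono_f
    apply Ext.postcomp_mk₀_injective_of_mono _ S.f
    simpa using h0 0 hi x
  | succ i =>
    have := h3 i (by omega)
    obtain ⟨y, rfl⟩ := Ext.covariant_sequence_exact₁ _ hS x (h0 _ hi x) rfl
    rw [Subsingleton.elim y 0, Ext.zero_comp]

lemma ExtVanish.left {m : Ideal R} {d : ℕ} {S : ShortComplex (ModuleCat.{u} R)}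
    (hS : S.ShortExact) (h2 : ExtVanish m (d + 1) S.X₂) (h3 : ExtVanish m d S.X₃) :
    ExtVanish m (d + 1) S.X₁ :=
  ExtVanish.left_of_zero hS (fun i hi x => by
    have := h2 i hi
    exact Subsingleton.elim _ _) h3

/-- The sequence `0 → R/(I : f) → R/I → R/(I + f) → 0`, as a short
exact sequence whose first map is multiplication by `f`. -/
lemma shortExact_colon {I I' I'' : Ideal R} (f : R) (h' : ∀ g, g ∈ I' ↔ f * g ∈ I)
    (h'' : I'' = I ⊔ Ideal.span {f}) :
    ∃ (α : ModuleCat.of R (R ⧸ I') ⟶ ModuleCat.of R (R ⧸ I))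
      (β : ModuleCat.of R (R ⧸ I) ⟶ ModuleCat.of R (R ⧸ I'')) (w : α ≫ β = 0),
      (ShortComplex.mk α β w).ShortExact ∧
      ∀ g : R, α.hom (Ideal.Quotient.mk I' g) = Ideal.Quotient.mk I (f * g) := by
  let a : (R ⧸ I') →ₗ[R] (R ⧸ I) := Submodule.mapQ I' I (LinearMap.mulLeft R f)
    (fun g hg => by simpa using (h' g).1 hg)
  have hle : I ≤ I'' := h'' ▸ le_sup_left
  let b : (R ⧸ I) →ₗ[R] (R ⧸ I'') := Submodule.mapQ I I'' LinearMap.id (by simpa using hle)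
  have ha : ∀ g : R, a (Ideal.Quotient.mk I' g) = Ideal.Quotient.mk I (f * g) := fun g => rfl
  have hb : ∀ g : R, b (Ideal.Quotient.mk I g) = Ideal.Quotient.mk I'' g := fun g => rfl
  have hf : f ∈ I'' := h'' ▸ Ideal.mem_sup_right (Ideal.mem_span_singleton_self f)
  have hab : ∀ x, b (a x) = 0 := by
    intro x
    obtain ⟨g, rfl⟩ := Ideal.Quotient.mk_surjective x
    rw [ha, hb, Ideal.Quotient.eq_zero_iff_mem]
    exact Ideal.mul_mem_right _ _ hf
  refine ⟨ModuleCat.ofHom a, ModuleCat.ofHom b, ?_, ?_, ha⟩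
  · exact ModuleCat.hom_ext (LinearMap.ext hab)
  · refine ShortComplex.ShortExact.mk' ?_ ?_ ?_
    · rw [ShortComplex.moduleCat_exact_iff]
      intro x hx
      obtain ⟨g, rfl⟩ := Ideal.Quotient.mk_surjective x
      have hx' : Ideal.Quotient.mk I'' g = 0 := hx
      rw [Ideal.Quotient.eq_zero_iff_mem, h'', Submodule.mem_sup] at hx'
      obtain ⟨y, hy, z, hz, rfl⟩ := hx'
      obtain ⟨c, rfl⟩ := Ideal.mem_span_singleton'.1 hz
      refine ⟨Ideal.Quotient.mk I' c, ?_⟩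
      refine (ha c).trans ?_
      rw [Ideal.Quotient.eq]
      have : f * c - (y + c * f) = -y := by ring
      rw [this]
      exact I.neg_mem hy
    · rw [ModuleCat.mono_iff_injective]
      refine (injective_iff_map_eq_zero a).2 fun x hx => ?_
      obtain ⟨g, rfl⟩ := Ideal.Quotient.mk_surjective x
      rw [ha, Ideal.Quotient.eq_zero_iff_mem] at hx
      exact Ideal.Quotient.eq_zero_iff_mem.2 ((h' g).2 hx)
    · rw [ModuleCat.epi_iff_surjective]
      intro x
      obtain ⟨g, rfl⟩ := Ideal.Quotient.mk_surjective x
      exact ⟨Ideal.Quotient.mk I g, hb g⟩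

/-- If `f ∈ m` is a nonzerodivisor on `R/I`, then `depth R/I ≥ depth R/(I + f) + 1`: `f` kills
`Ext^i(R/m, -)`, so the long exact sequence splits into short ones. -/
lemma ExtVanish.of_regular {m I I'' : Ideal R} {d : ℕ} (f : R) (hf : f ∈ m)
    (h' : ∀ g, g ∈ I ↔ f * g ∈ I) (h'' : I'' = I ⊔ Ideal.span {f})
    (h : ExtVanish m d (ModuleCat.of R (R ⧸ I''))) :
    ExtVanish m (d + 1) (ModuleCat.of R (R ⧸ I)) := by
  obtain ⟨α, β, w, hS, hα⟩ := shortExact_colon f h' h''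
  refine ExtVanish.left_of_zero hS (fun i _ x => ?_) h
  have e : α = f • 𝟙 (ModuleCat.of R (R ⧸ I)) := by
    refine ModuleCat.hom_ext (LinearMap.ext fun (y : R ⧸ I) => ?_)
    obtain ⟨g, rfl⟩ := Ideal.Quotient.mk_surjective y
    exact hα g
  have hann : f ∈ Module.annihilator R (ModuleCat.of R (R ⧸ m)) := by
    change f ∈ Module.annihilator R (R ⧸ m)
    rwa [Ideal.annihilator_quotient]
  have := Ext.postcomp_smul_id_eq_zero_of_mem_annihilator
    (M := ModuleCat.of R (R ⧸ I)) hann i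
  have h2 := congrArg (fun φ => φ.hom x) this
  subst e
  exact h2

/-- The depth lemma for the Mayer-Vietoris sequence
`0 → R/(I ∩ Q) → R/I × R/Q → R/(I + Q) → 0`. -/
lemma ExtVanish.sup {m I Q : Ideal R} {d : ℕ}
    (h : ExtVanish m (d + 1) (ModuleCat.of R (R ⧸ (I ⊓ Q))))
    (hI : ExtVanish m d (ModuleCat.of R (R ⧸ I))) (hQ : ExtVanish m d (ModuleCat.of R (R ⧸ Q))) :
    ExtVanish m d (ModuleCat.of R (R ⧸ (I ⊔ Q))) := by
  have hprod : ExtVanish m d (ModuleCat.of R ((R ⧸ I) × (R ⧸ Q))) := by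
    let S : ShortComplex (ModuleCat.{u} R) := ShortComplex.mk
      (ModuleCat.ofHom (LinearMap.inl R (R ⧸ I) (R ⧸ Q)))
      (ModuleCat.ofHom (LinearMap.snd R (R ⧸ I) (R ⧸ Q)))
      (ModuleCat.hom_ext (LinearMap.ext fun _ => rfl))
    refine ExtVanish.mid (S := S) (ShortComplex.ShortExact.mk' ?_ ?_ ?_) hI hQ
    · rw [ShortComplex.moduleCat_exact_iff]
      rintro ⟨x, y⟩ hx
      exact ⟨x, Prod.ext rfl (Eq.symm hx)⟩
    · exact (ModuleCat.mono_iff_injective _).2 LinearMap.inl_injective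
    · exact (ModuleCat.epi_iff_surjective _).2 LinearMap.snd_surjective
  let a : (R ⧸ (I ⊓ Q)) →ₗ[R] ((R ⧸ I) × (R ⧸ Q)) :=
    LinearMap.prod (Submodule.mapQ (I ⊓ Q) I LinearMap.id (fun _ hx => hx.1))
      (Submodule.mapQ (I ⊓ Q) Q LinearMap.id (fun _ hx => hx.2))
  let b : ((R ⧸ I) × (R ⧸ Q)) →ₗ[R] (R ⧸ (I ⊔ Q)) :=
    (Submodule.mapQ I (I ⊔ Q) LinearMap.id (fun _ hx => Ideal.mem_sup_left hx)).comp
        (LinearMap.fst R _ _) -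
      (Submodule.mapQ Q (I ⊔ Q) LinearMap.id (fun _ hx => Ideal.mem_sup_right hx)).comp
        (LinearMap.snd R _ _)
  have ha : ∀ g : R, a (Ideal.Quotient.mk _ g) =
    (Ideal.Quotient.mk I g, Ideal.Quotient.mk Q g) := fun g => rfl
  have hb : ∀ g g' : R, b (Ideal.Quotient.mk I g, Ideal.Quotient.mk Q g') =
    Ideal.Quotient.mk (I ⊔ Q) (g - g') := fun g g' => rfl
  let S : ShortComplex (ModuleCat.{u} R) := ShortComplex.mk (ModuleCat.ofHom a)
    (ModuleCat.ofHom b) (by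
      refine ModuleCat.hom_ext (LinearMap.ext fun (y : R ⧸ (I ⊓ Q)) => ?_)
      obtain ⟨g, rfl⟩ := Ideal.Quotient.mk_surjective y
      change b (a _) = 0
      rw [ha, hb, sub_self, map_zero])
  refine ExtVanish.right (S := S) (ShortComplex.ShortExact.mk' ?_ ?_ ?_) h hprod
  · rw [ShortComplex.moduleCat_exact_iff]
    rintro ⟨x, y⟩ hx
    obtain ⟨g, rfl⟩ := Ideal.Quotient.mk_surjective x
    obtain ⟨g', rfl⟩ := Ideal.Quotient.mk_surjective y
    have hx' : Ideal.Quotient.mk (I ⊔ Q) (g - g') = 0 := hx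
    rw [Ideal.Quotient.eq_zero_iff_mem, Submodule.mem_sup] at hx'
    obtain ⟨y, hy, z, hz, e⟩ := hx'
    refine ⟨Ideal.Quotient.mk (I ⊓ Q) (g - y), ?_⟩
    refine (ha _).trans (Prod.ext ?_ ?_)
    · exact Ideal.Quotient.eq.2 (by simpa using hy)
    · exact Ideal.Quotient.eq.2 (by
        have : g - y - g' = z := by linear_combination -e
        rwa [this])
  · refine (ModuleCat.mono_iff_injective _).2 ((injective_iff_map_eq_zero a).2 fun x hx => ?_)
    obtain ⟨g, rfl⟩ := Ideal.Quotient.mk_surjective x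
    rw [ha, Prod.mk_eq_zero, Ideal.Quotient.eq_zero_iff_mem, Ideal.Quotient.eq_zero_iff_mem] at hx
    exact Ideal.Quotient.eq_zero_iff_mem.2 hx
  · refine (ModuleCat.epi_iff_surjective _).2 fun x => ?_
    obtain ⟨g, rfl⟩ := Ideal.Quotient.mk_surjective x
    refine ⟨(Ideal.Quotient.mk I g, Ideal.Quotient.mk Q 0), ?_⟩
    exact (hb g 0).trans (by rw [sub_zero])

/-- `R/m` has depth zero over `m`, because `Hom(R/m, R/m) ≠ 0`. -/
lemma not_extVanish_self {m : Ideal R} (hm : m ≠ ⊤) :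
    ¬ ExtVanish m 1 (ModuleCat.of R (R ⧸ m)) := by
  intro h
  have := h 0 one_pos
  have hs : Subsingleton (ModuleCat.of R (R ⧸ m) ⟶ ModuleCat.of R (R ⧸ m)) :=
    (Ext.addEquiv₀ (X := ModuleCat.of R (R ⧸ m)) (Y := ModuleCat.of R (R ⧸ m)))
      |>.symm.injective.subsingleton
  have h1 := congrArg (fun φ => φ.hom (Ideal.Quotient.mk m 1)) (hs.elim (𝟙 _) 0)
  have h2 : Ideal.Quotient.mk m 1 = 0 := h1
  exact hm ((Ideal.eq_top_iff_one _).2 (Ideal.Quotient.eq_zero_iff_mem.1 h2))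

lemma extVanish_top (m : Ideal R) (d : ℕ) : ExtVanish m d (ModuleCat.of R (R ⧸ (⊤ : Ideal R))) := by
  intro i _
  refine subsingleton_of_forall_eq 0 fun x => ?_
  have hid : 𝟙 (ModuleCat.of R (R ⧸ (⊤ : Ideal R))) = 0 := by
    refine ModuleCat.hom_ext (LinearMap.ext fun _ => ?_)
    exact Subsingleton.elim (α := R ⧸ (⊤ : Ideal R)) _ _
  rw [← Ext.comp_mk₀_id x, hid, Ext.mk₀_zero, Ext.comp_zero]

/-- Rees' theorem for `R/I`: a maximal `R/I`-regular sequence in `m` has length `d` as soon as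
`Ext^i(R/m, R/I)` vanishes for `i < d` but not for all `i < d + 1`. -/
lemma sSup_regular_eq [IsNoetherianRing R] {m I : Ideal R} (hm : m ≠ ⊤) (hI : I ≤ m) {d : ℕ}
    (h : ExtVanish m d (ModuleCat.of R (R ⧸ I)))
    (h' : ¬ ExtVanish m (d + 1) (ModuleCat.of R (R ⧸ I))) :
    sSup {d : ℕ | ∃ rs : List R, rs.length = d ∧ (∀ r ∈ rs, r ∈ m) ∧
      RingTheory.Sequence.IsRegular (R ⧸ I) rs} = d := by
  have hlt : m • (⊤ : Submodule R (R ⧸ I)) < ⊤ := by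
    rw [lt_top_iff_ne_top]
    intro e
    have h1 : (Ideal.Quotient.mk I 1) ∈ m • (⊤ : Submodule R (R ⧸ I)) := by
      rw [e]; exact Submodule.mem_top
    have h2 : m • (⊤ : Submodule R (R ⧸ I)) ≤ Submodule.map (Submodule.mkQ I) m := by
      rw [Submodule.smul_le]
      intro r hr x _
      obtain ⟨g, rfl⟩ := Ideal.Quotient.mk_surjective x
      exact ⟨r * g, m.mul_mem_right _ hr, rfl⟩
    obtain ⟨g, hg, e⟩ := h2 h1
    have e' : Ideal.Quotient.mk I g = Ideal.Quotient.mk I 1 := e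
    rw [Ideal.Quotient.eq] at e'
    exact hm ((Ideal.eq_top_iff_one _).2 (by simpa using m.sub_mem hg (hI e')))
  have hsupp : Module.support R (R ⧸ m) = PrimeSpectrum.zeroLocus m := by
    rw [Module.support_eq_zeroLocus, Ideal.annihilator_quotient]
  have key : ∀ e : ℕ, (∃ rs : List R, rs.length = e ∧ (∀ r ∈ rs, r ∈ m) ∧
      RingTheory.Sequence.IsRegular (R ⧸ I) rs) ↔ ExtVanish m e (ModuleCat.of R (R ⧸ I)) := by
    intro e
    constructor
    · rintro ⟨rs, rfl, hmem, hreg⟩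
      exact ModuleCat.subsingleton_ext_of_exists_isRegular m (ModuleCat.of R (R ⧸ m)) hsupp.le
        (ModuleCat.of R (R ⧸ I)) hlt rs hmem hreg
    · intro he
      exact ModuleCat.exists_isRegular_of_exists_subsingleton_ext m e (ModuleCat.of R (R ⧸ I)) hlt
        (ModuleCat.of R (R ⧸ m)) hsupp he
  simp_rw [key]
  refine IsGreatest.csSup_eq ⟨h, fun e he => ?_⟩
  by_contra hc
  exact h' (ExtVanish.mono he (by omega))

end ExtDepth

/-! ### Depth of monomial ideals -/

section Monomial

variable (K : Type u) [Field K] {n : ℕ}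

/-- The monomial ideal generated by the monomials with exponent vector in `S`. It is used for
upper sets `S`, for which the monomials it contains are exactly those with exponent in `S`. -/
noncomputable def monoIdeal (S : Set (Fin n →₀ ℕ)) : Ideal (MvPolynomial (Fin n) K) :=
  Ideal.span ((fun s => monomial s (1 : K)) '' S)

/-- `DepthGE K d S` says that `depth R/I ≥ d`, where `I` is the monomial ideal with exponent
set `S`, in the sense that `Ext^i(R/m, R/I) = 0` for `i < d`. In particular it holds for every `d`
when `I = R`. -/
def DepthGE (d : ℕ) (S : Set (Fin n →₀ ℕ)) : Prop :=
  ExtVanish (maxIdeal K n) d (ModuleCat.of _ (MvPolynomial (Fin n) K ⧸ monoIdeal K S))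

variable {K}

lemma mem_monoIdeal {S : Set (Fin n →₀ ℕ)} (hS : IsUpperSet S) {p : MvPolynomial (Fin n) K} :
    p ∈ monoIdeal K S ↔ ∀ a ∈ p.support, a ∈ S := by
  rw [monoIdeal, mem_ideal_span_monomial_image]
  constructor
  · intro h a ha
    obtain ⟨s, hs, hsa⟩ := h a ha
    exact hS hsa hs
  · exact fun h a ha => ⟨a, h a ha, le_rfl⟩

lemma monomial_mem_monoIdeal {S : Set (Fin n →₀ ℕ)} {a : Fin n →₀ ℕ} (ha : a ∈ S) :
    monomial a (1 : K) ∈ monoIdeal K S := Ideal.subset_span ⟨a, ha, rfl⟩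

lemma isUpperSet_colon {S S' : Set (Fin n →₀ ℕ)} (hS : IsUpperSet S) {b : Fin n →₀ ℕ}
    (h : ∀ a, a ∈ S' ↔ a + b ∈ S) : IsUpperSet S' := fun x y hxy hx =>
  (h y).2 (hS (add_le_add_left hxy b) ((h x).1 hx))

lemma monoIdeal_colon {S S' : Set (Fin n →₀ ℕ)} (hS : IsUpperSet S) {b : Fin n →₀ ℕ}
    (h : ∀ a, a ∈ S' ↔ a + b ∈ S) (p : MvPolynomial (Fin n) K) :
    p ∈ monoIdeal K S' ↔ monomial b 1 * p ∈ monoIdeal K S := by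
  rw [mem_monoIdeal (isUpperSet_colon hS h), mem_monoIdeal hS]
  constructor
  · intro hp a ha
    rw [mem_support_iff, coeff_monomial_mul'] at ha
    split_ifs at ha with hb
    · have := (h _).1 (hp (a - b) (mem_support_iff.2 (by simpa using ha)))
      rwa [tsub_add_cancel_of_le hb] at this
    · exact absurd rfl ha
  · intro hp a ha
    refine (h a).2 (hp _ ?_)
    rw [mem_support_iff, add_comm, coeff_monomial_mul, one_mul]
    exact mem_support_iff.1 ha

lemma monoIdeal_sup {S S'' : Set (Fin n →₀ ℕ)} {b : Fin n →₀ ℕ}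
    (h : ∀ a, a ∈ S'' ↔ a ∈ S ∨ b ≤ a) :
    monoIdeal K S'' = monoIdeal K S ⊔ Ideal.span {monomial b 1} := by
  apply le_antisymm
  · refine Ideal.span_le.2 ?_
    rintro _ ⟨a, ha, rfl⟩
    rcases (h a).1 ha with ha | ha
    · exact Ideal.mem_sup_left (monomial_mem_monoIdeal ha)
    · refine Ideal.mem_sup_right (Ideal.mem_span_singleton'.2 ⟨monomial (a - b) 1, ?_⟩)
      rw [monomial_mul, tsub_add_cancel_of_le ha, one_mul]
  · refine sup_le (Ideal.span_mono (Set.image_mono fun a ha => (h a).2 (Or.inl ha))) ?_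
    rw [Ideal.span_singleton_le_iff_mem]
    exact monomial_mem_monoIdeal ((h b).2 (Or.inr le_rfl))

lemma monomial_mem_maxIdeal {b : Fin n →₀ ℕ} (hb : b ≠ 0) :
    monomial b (1 : K) ∈ maxIdeal K n := by
  obtain ⟨i, hi⟩ := Finsupp.ne_iff.1 hb
  rw [maxIdeal, ← Set.image_univ, mem_ideal_span_X_image]
  intro m hm
  have := support_monomial_subset hm
  rw [Finset.mem_singleton] at this
  exact ⟨i, trivial, by simpa [this] using hi⟩

lemma mem_maxIdeal_iff {p : MvPolynomial (Fin n) K} :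
    p ∈ maxIdeal K n ↔ ∀ a ∈ p.support, a ≠ 0 := by
  rw [maxIdeal, ← Set.image_univ, mem_ideal_span_X_image]
  simp [Finsupp.ne_iff]

lemma maxIdeal_ne_top : maxIdeal K n ≠ ⊤ := by
  rw [Ne, Ideal.eq_top_iff_one, mem_maxIdeal_iff]
  intro h
  exact h 0 (by simp) rfl

lemma DepthGE.mono {S : Set (Fin n →₀ ℕ)} {d e : ℕ} (h : DepthGE K d S) (hde : e ≤ d) :
    DepthGE K e S := ExtVanish.mono h hde

lemma DepthGE.mid {d : ℕ} {S S' S'' : Set (Fin n →₀ ℕ)} (hS : IsUpperSet S) (b : Fin n →₀ ℕ)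
    (h' : ∀ a, a ∈ S' ↔ a + b ∈ S) (h'' : ∀ a, a ∈ S'' ↔ a ∈ S ∨ b ≤ a)
    (h1 : DepthGE K d S') (h3 : DepthGE K d S'') : DepthGE K d S := by
  obtain ⟨α, β, w, hE, -⟩ := shortExact_colon (monomial b (1 : K)) (monoIdeal_colon hS h')
    (monoIdeal_sup h'')
  exact ExtVanish.mid hE h1 h3

lemma DepthGE.right {d : ℕ} {S S' S'' : Set (Fin n →₀ ℕ)} (hS : IsUpperSet S) (b : Fin n →₀ ℕ)
    (h' : ∀ a, a ∈ S' ↔ a + b ∈ S) (h'' : ∀ a, a ∈ S'' ↔ a ∈ S ∨ b ≤ a)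
    (h1 : DepthGE K (d + 1) S') (h2 : DepthGE K d S) : DepthGE K d S'' := by
  obtain ⟨α, β, w, hE, -⟩ := shortExact_colon (monomial b (1 : K)) (monoIdeal_colon hS h')
    (monoIdeal_sup h'')
  exact ExtVanish.right hE h1 h2

lemma DepthGE.left {d : ℕ} {S S' S'' : Set (Fin n →₀ ℕ)} (hS : IsUpperSet S) (b : Fin n →₀ ℕ)
    (h' : ∀ a, a ∈ S' ↔ a + b ∈ S) (h'' : ∀ a, a ∈ S'' ↔ a ∈ S ∨ b ≤ a)
    (h2 : DepthGE K (d + 1) S) (h3 : DepthGE K d S'') : DepthGE K (d + 1) S' := by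
  obtain ⟨α, β, w, hE, -⟩ := shortExact_colon (monomial b (1 : K)) (monoIdeal_colon hS h')
    (monoIdeal_sup h'')
  exact ExtVanish.left hE h2 h3

lemma DepthGE.of_regular {d : ℕ} {S S'' : Set (Fin n →₀ ℕ)} (hS : IsUpperSet S)
    {b : Fin n →₀ ℕ} (hb : b ≠ 0)
    (h' : ∀ a, a ∈ S ↔ a + b ∈ S) (h'' : ∀ a, a ∈ S'' ↔ a ∈ S ∨ b ≤ a)
    (h : DepthGE K d S'') : DepthGE K (d + 1) S :=
  ExtVanish.of_regular _ (monomial_mem_maxIdeal hb) (monoIdeal_colon hS h') (monoIdeal_sup h'') h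

lemma DepthGE.union {d : ℕ} {S T : Set (Fin n →₀ ℕ)} (hS : IsUpperSet S) (hT : IsUpperSet T)
    (h : DepthGE K (d + 1) (S ∩ T)) (h1 : DepthGE K d S) (h2 : DepthGE K d T) :
    DepthGE K d (S ∪ T) := by
  have e1 : monoIdeal K (S ∩ T) = monoIdeal K S ⊓ monoIdeal K T := by
    ext p
    rw [Submodule.mem_inf, mem_monoIdeal hS, mem_monoIdeal hT, mem_monoIdeal (hS.inter hT)]
    exact ⟨fun h => ⟨fun a ha => (h a ha).1, fun a ha => (h a ha).2⟩,
      fun h a ha => ⟨h.1 a ha, h.2 a ha⟩⟩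
  have e2 : monoIdeal K (S ∪ T) = monoIdeal K S ⊔ monoIdeal K T := by
    rw [monoIdeal, Set.image_union, Ideal.span_union]; rfl
  unfold DepthGE at *
  rw [e1] at h
  rw [e2]
  exact ExtVanish.sup h h1 h2

lemma depthGE_univ (d : ℕ) : DepthGE K d (Set.univ : Set (Fin n →₀ ℕ)) := by
  have : monoIdeal K (Set.univ : Set (Fin n →₀ ℕ)) = ⊤ := by
    rw [Ideal.eq_top_iff_one]
    exact monomial_mem_monoIdeal (a := 0) trivial
  unfold DepthGE
  rw [this]
  exact extVanish_top _ _

/-- The exponent set of the ideal generated by the first `j` variables. -/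
def initSet (n j : ℕ) : Set (Fin n →₀ ℕ) := {a | ∃ i : Fin n, i.1 < j ∧ a i ≠ 0}

lemma initSet_upper (j : ℕ) : IsUpperSet (initSet n j) := by
  rintro x y hxy ⟨i, hi, hx⟩
  exact ⟨i, hi, by have := hxy i; omega⟩

lemma initSet_colon {j : ℕ} (hj : j < n) (a : Fin n →₀ ℕ) :
    a ∈ initSet n j ↔ a + Finsupp.single ⟨j, hj⟩ 1 ∈ initSet n j := by
  have : ∀ i : Fin n, i.1 < j → (Finsupp.single (⟨j, hj⟩ : Fin n) 1) i = 0 := by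
    intro i hi
    rw [Finsupp.single_apply, if_neg]
    rintro rfl
    exact lt_irrefl _ hi
  constructor
  · rintro ⟨i, hi, h⟩
    exact ⟨i, hi, by simp [this i hi, h]⟩
  · rintro ⟨i, hi, h⟩
    exact ⟨i, hi, by simpa [this i hi] using h⟩

lemma initSet_succ {j : ℕ} (hj : j < n) (a : Fin n →₀ ℕ) :
    a ∈ initSet n (j + 1) ↔ a ∈ initSet n j ∨ Finsupp.single ⟨j, hj⟩ 1 ≤ a := by
  rw [Finsupp.single_le_iff]
  constructor
  · rintro ⟨i, hi, h⟩
    rcases Nat.lt_succ_iff_lt_or_eq.1 hi with hi | hi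
    · exact Or.inl ⟨i, hi, h⟩
    · right
      have : i = ⟨j, hj⟩ := Fin.ext hi
      subst this
      omega
  · rintro (⟨i, hi, h⟩ | h)
    · exact ⟨i, by omega, h⟩
    · exact ⟨⟨j, hj⟩, by simp, by omega⟩

lemma initSet_zero : initSet n 0 = ∅ := by
  ext a; simp [initSet]

lemma monoIdeal_initSet : monoIdeal K (initSet n n) = maxIdeal K n := by
  ext p
  rw [mem_monoIdeal (initSet_upper n), mem_maxIdeal_iff]
  refine forall₂_congr fun a _ => ?_
  simp [initSet, Finsupp.ne_iff]

/-- The polynomial ring has depth at least `n`. -/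
lemma depthGE_empty : DepthGE K n (∅ : Set (Fin n →₀ ℕ)) := by
  have : ∀ d ≤ n, DepthGE K d (initSet n (n - d)) := by
    intro d
    induction d with
    | zero =>
      intro _ i hi
      exact absurd hi (Nat.not_lt_zero i)
    | succ d ih =>
      intro hd
      have hj : n - (d + 1) < n := by omega
      refine DepthGE.of_regular (initSet_upper _) (b := Finsupp.single ⟨n - (d + 1), hj⟩ 1)
        (by simp) (initSet_colon hj) (initSet_succ hj) ?_
      have e : n - (d + 1) + 1 = n - d := by omega
      rw [e]
      exact ih (by omega)
  have := this n le_rfl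
  rwa [Nat.sub_self, initSet_zero] at this

/-- The polynomial ring has depth at most `n`. -/
lemma not_depthGE_empty : ¬ DepthGE K (n + 1) (∅ : Set (Fin n →₀ ℕ)) := by
  intro h0
  have : ∀ j ≤ n, DepthGE K (n + 1 - j) (initSet n j) := by
    intro j
    induction j with
    | zero => intro _; rwa [initSet_zero]
    | succ j ih =>
      intro hj
      have e : n + 1 - j = (n + 1 - (j + 1)) + 1 := by omega
      have ih' := ih (by omega)
      refine DepthGE.right (initSet_upper _) _ (initSet_colon hj) (initSet_succ hj) (e ▸ ih')
        (ih'.mono (by omega))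
  have h := this n le_rfl
  unfold DepthGE at h
  rw [monoIdeal_initSet, Nat.add_sub_cancel_left] at h
  exact not_extVanish_self maxIdeal_ne_top h

/-- A nonzero principal monomial ideal has depth at least `n - 1`. -/
lemma depthGE_Ici {d : ℕ} (hd : d + 1 ≤ n) (b : Fin n →₀ ℕ) : DepthGE K d (Set.Ici b) :=
  DepthGE.right (S := ∅) (S' := ∅) isUpperSet_empty b (by simp) (by simp)
    (depthGE_empty.mono hd) (depthGE_empty.mono (by omega))

end Monomial

/-! ### Weighted path ideals -/

section Weights

variable {K : Type u} [Field K] {n : ℕ}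

/-- The exponent of the variable with index `i` (counted from `0`), read as `0` for `i ≥ n`. -/
def ev (a : Fin n →₀ ℕ) (i : ℕ) : ℕ := if h : i < n then a ⟨i, h⟩ else 0

/-- The exponent vector of the `k`-th power of the variable with index `i`; it is `0` for
`i ≥ n`. -/
noncomputable def es (n i k : ℕ) : Fin n →₀ ℕ :=
  if h : i < n then Finsupp.single ⟨i, h⟩ k else 0

lemma ev_of_le (a : Fin n →₀ ℕ) {i : ℕ} (h : n ≤ i) : ev a i = 0 := dif_neg (by omega)

lemma ev_add (a b : Fin n →₀ ℕ) (i : ℕ) : ev (a + b) i = ev a i + ev b i := by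
  unfold ev; split_ifs <;> simp

lemma ev_es (i k j : ℕ) : ev (es n i k) j = if i = j ∧ i < n then k else 0 := by
  unfold ev es
  by_cases hi : i < n <;> by_cases hj : j < n <;> simp [hi, hj, Finsupp.single_apply]
  omega

lemma ev_mono {a b : Fin n →₀ ℕ} (h : a ≤ b) (i : ℕ) : ev a i ≤ ev b i := by
  unfold ev; split_ifs
  · exact h _
  · exact le_rfl

lemma le_iff_ev {a b : Fin n →₀ ℕ} : a ≤ b ↔ ∀ i, ev a i ≤ ev b i := by
  refine ⟨fun h => ev_mono h, fun h i => ?_⟩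
  have := h i.1
  simpa [ev] using this

lemma es_le_iff {i k : ℕ} (hi : i < n) {a : Fin n →₀ ℕ} : es n i k ≤ a ↔ k ≤ ev a i := by
  simp [es, ev, hi]

lemma es_ne_zero {i : ℕ} (hi : i < n) : es n i 1 ≠ 0 := by
  simp [es, hi]

/-- The exponents `a` with `w i ≤ a_i + a_{i+1}` for all `i`, that is, the exponent set of
`⋂_i (x_i, x_{i+1})^{w i}`: the weighted analogue of a symbolic power of the cover ideal. -/
def IW (n : ℕ) (w : ℕ → ℕ) : Set (Fin n →₀ ℕ) := {a | ∀ i, w i ≤ ev a i + ev a (i + 1)}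

lemma mem_IW {w : ℕ → ℕ} {a : Fin n →₀ ℕ} :
    a ∈ IW n w ↔ ∀ i, w i ≤ ev a i + ev a (i + 1) := Iff.rfl

lemma isUpperSet_IW (w : ℕ → ℕ) : IsUpperSet (IW n w) := fun _ _ h hx i =>
  (hx i).trans (Nat.add_le_add (ev_mono h _) (ev_mono h _))

/-- The colon ideal by a power of a variable lowers the weights of the incident edges. -/
lemma IW_colon {w w' : ℕ → ℕ} {v k : ℕ} (hv : v < n)
    (hw : ∀ i, w' i = if i = v ∨ i + 1 = v then w i - k else w i) (a : Fin n →₀ ℕ) :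
    a ∈ IW n w' ↔ a + es n v k ∈ IW n w := by
  simp only [mem_IW]
  refine forall_congr' fun i => ?_
  rw [hw, ev_add, ev_add, ev_es, ev_es]
  split_ifs <;> omega

/-- The depth of the sum of `⋂_i (x_i, x_{i+1})^{w i}` and `(x_{u+1})`. Modulo `x_{u+1}`, the two
edges at `u + 1` force the monomial `x_u^{w u} x_{u+2}^{w (u+1)}`, and the colon ideal by it is
again of weighted type, with weights `w''`. -/
lemma depthGE_sum {d u : ℕ} {w w'' : ℕ → ℕ} (hu : u + 1 < n) (hcut : ∀ i, n ≤ i + 1 → w i = 0)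
    (hw : ∀ i, w'' i = if i = u ∨ i = u + 1 then 0 else if i + 1 = u then w i - w u
      else if i = u + 2 then w i - w (u + 1) else w i)
    (hd : d + 2 ≤ n) (h : DepthGE K (d + 1) (IW n w'')) :
    DepthGE K d {a | a ∈ IW n w ∨ es n (u + 1) 1 ≤ a} := by
  set w0 : ℕ → ℕ := fun i => if i = u ∨ i = u + 1 then 0 else w i with hw0
  set T : Set (Fin n →₀ ℕ) := {a | a ∈ IW n w0 ∧ w u ≤ ev a u ∧ w (u + 1) ≤ ev a (u + 2)} with hT
  have hTu : IsUpperSet T := fun x y hxy hx =>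
    ⟨isUpperSet_IW _ hxy hx.1, hx.2.1.trans (ev_mono hxy _), hx.2.2.trans (ev_mono hxy _)⟩
  have hlast : n ≤ u + 2 → w (u + 1) = 0 := fun h => hcut _ h
  have hTd : DepthGE K (d + 1) T := by
    refine DepthGE.mid (S' := IW n w'') (S'' := Set.Ici (es n u (w u) + es n (u + 2) (w (u + 1))))
      hTu (es n u (w u) + es n (u + 2) (w (u + 1))) (fun a => ?_) (fun a => ?_) h
      (depthGE_Ici (by omega) _)
    · simp only [hT, Set.mem_ofPred_eq, mem_IW, ev_add, ev_es]
      constructor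
      · intro ha
        refine ⟨fun i => ?_, ?_, ?_⟩
        · have := ha i
          rw [hw] at this
          simp only [hw0]
          by_cases hn : u + 2 < n
          · split_ifs at this ⊢ <;> grind
          · have := hlast (by omega)
            split_ifs at this ⊢ <;> grind
        · simp [show u < n by omega]
        · by_cases hn : u + 2 < n
          · simp [hn]
          · have := hlast (by omega)
            omega
      · rintro ⟨ha, -, -⟩ i
        have := ha i
        rw [hw]
        simp only [hw0] at this
        split_ifs at this ⊢ <;> grind
    · rw [Set.mem_Ici]
      refine ⟨fun h => Or.inr h, ?_⟩
      rintro (⟨-, h1, h2⟩ | h)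
      · rw [le_iff_ev]
        intro i
        rw [ev_add, ev_es, ev_es]
        split_ifs <;> grind
      · exact h
  refine DepthGE.right (S := T) (S' := T) hTu (es n (u + 1) 1) (fun a => ?_) (fun a => ?_) hTd
    (hTd.mono (by omega))
  · simp only [hT, Set.mem_ofPred_eq, mem_IW, ev_add, ev_es, hw0]
    refine and_congr (forall_congr' fun i => ?_) (and_congr ?_ ?_)
    · split_ifs <;> omega
    · split_ifs <;> omega
    · split_ifs <;> omega
  · rw [Set.mem_ofPred_eq, es_le_iff hu]
    by_cases h0 : 1 ≤ ev a (u + 1)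
    · simp [h0]
    · simp only [h0, or_false, hT, Set.mem_ofPred_eq, mem_IW, hw0]
      constructor
      · intro h
        refine ⟨fun i => ?_, ?_, ?_⟩
        · split_ifs
          · exact Nat.zero_le _
          · exact h i
        · have := h u; omega
        · have := h (u + 1); rw [show u + 1 + 1 = u + 2 from rfl] at this; omega
      · rintro ⟨h1, h2, h3⟩ i
        have := h1 i
        split_ifs at this with hi
        · rcases hi with rfl | rfl
          · omega
          · rw [show u + 1 + 1 = u + 2 from rfl]; omega
        · exact this

/-- `Low K n w s` says that the depth of the quotient by the ideal of weights `w` is at least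
`n - 1 - s`. -/
def Low (K : Type u) [Field K] (n : ℕ) (w : ℕ → ℕ) (s : ℕ) : Prop :=
  ∀ d, d + s + 1 ≤ n → DepthGE K d (IW n w)

/-- `Up K n w m` says that the depth of the quotient by the ideal of weights `w` is less than
`n - m`. -/
def Up (K : Type u) [Field K] (n : ℕ) (w : ℕ → ℕ) (m : ℕ) : Prop :=
  ∀ d, n ≤ d + m → ¬ DepthGE K d (IW n w)

lemma Low.mono {w : ℕ → ℕ} {s s' : ℕ} (h : Low K n w s) (hs : s ≤ s') : Low K n w s' :=
  fun d hd => h d (by omega)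

lemma low_zero : Low K n (fun _ => 0) 0 := by
  intro d _
  have : IW n (fun _ => 0) = Set.univ := Set.eq_univ_of_forall fun a i => Nat.zero_le _
  rw [this]
  exact depthGE_univ d

/-- The lower depth bound is inherited from the colon and the sum by the variable `x_{u+1}`. -/
lemma Low.step {w w' w'' : ℕ → ℕ} {u s s' : ℕ} (hu : u + 1 < n)
    (hcut : ∀ i, n ≤ i + 1 → w i = 0)
    (hw' : ∀ i, w' i = if i = u + 1 ∨ i + 1 = u + 1 then w i - 1 else w i)
    (hw'' : ∀ i, w'' i = if i = u ∨ i = u + 1 then 0 else if i + 1 = u then w i - w u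
      else if i = u + 2 then w i - w (u + 1) else w i)
    (h1 : Low K n w' s) (h2 : Low K n w'' s') (hs : s' + 1 ≤ s) : Low K n w s := fun d hd =>
  DepthGE.mid (isUpperSet_IW w) _ (IW_colon hu hw') (fun _ => Iff.rfl) (h1 d hd)
    (depthGE_sum hu hcut hw'' (by omega) (h2 _ (by omega)))

/-- The upper depth bound is inherited from the colon by the variable `x_{u+1}`, provided that the
sum has large enough depth. -/
lemma not_depthGE_step {w w' w'' : ℕ → ℕ} {u m : ℕ} (hu : u + 1 < n)
    (hcut : ∀ i, n ≤ i + 1 → w i = 0)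
    (hw' : ∀ i, w' i = if i = u + 1 ∨ i + 1 = u + 1 then w i - 1 else w i)
    (hw'' : ∀ i, w'' i = if i = u ∨ i = u + 1 then 0 else if i + 1 = u then w i - w u
      else if i = u + 2 then w i - w (u + 1) else w i)
    (hm : m + 2 ≤ n) (h1 : ¬ DepthGE K (n - (m + 1)) (IW n w')) (h2 : Low K n w'' m) :
    ¬ DepthGE K (n - (m + 1)) (IW n w) := by
  intro h
  obtain ⟨d, hd⟩ : ∃ d, n - (m + 1) = d + 1 := ⟨n - (m + 2), by omega⟩
  rw [hd] at h h1
  exact h1 (DepthGE.left (isUpperSet_IW w) _ (IW_colon hu hw') (fun _ => Iff.rfl) h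
    (depthGE_sum hu hcut hw'' (by omega) (h2 _ (by omega))))

/-- Adding an edge of weight one that is disjoint from the others lowers depth by at most one. -/
lemma Low.isolated {w w0 : ℕ → ℕ} {j s : ℕ} (hj : j + 1 < n) (hcut : ∀ i, n ≤ i + 1 → w i = 0)
    (h0 : ∀ i, w0 i = if i = j then 0 else w i) (h1 : w j = 1) (hr : w (j + 1) = 0)
    (hl : ∀ i, i + 1 = j → w i = 0) (h : Low K n w0 s) : Low K n w (s + 1) := by
  refine Low.step (w' := w0) (w'' := w0) hj hcut (fun i => ?_) (fun i => ?_) (h.mono (by omega)) h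
    le_rfl
  · rw [h0]; split_ifs <;> grind
  · rw [h0]; have := hl i; split_ifs <;> grind

/-- If the ideal of `S` equals its colon ideals by `x_j` and by `x_{j+1}`, then `x_j, x_{j+1}` is a
regular sequence on its quotient, and its depth exceeds that of the sum with
`(x_j, x_{j+1})`, whose exponent set is `Q`, by at least two. -/
lemma DepthGE.add_two {S Q : Set (Fin n →₀ ℕ)} (hS : IsUpperSet S) {j d : ℕ} (hj : j + 1 < n)
    (h0 : ∀ a, a ∈ S ↔ a + es n j 1 ∈ S) (h1 : ∀ a, a ∈ S ↔ a + es n (j + 1) 1 ∈ S)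
    (hQ : ∀ a, a ∈ Q ↔ a ∈ S ∨ 1 ≤ ev a j + ev a (j + 1)) (h : DepthGE K d Q) :
    DepthGE K (d + 2) S := by
  have hj' : j < n := by omega
  refine DepthGE.of_regular (S'' := {a | a ∈ S ∨ es n j 1 ≤ a}) hS (es_ne_zero hj') h0
    (fun _ => Iff.rfl) (DepthGE.of_regular (S'' := Q) ?_ (es_ne_zero hj) (fun a => ?_)
      (fun a => ?_) h)
  · rintro x y hxy (hx | hx)
    · exact Or.inl (hS hxy hx)
    · exact Or.inr (hx.trans hxy)
  · rw [Set.mem_ofPred_eq, Set.mem_ofPred_eq, ← h1, es_le_iff hj', es_le_iff hj', ev_add, ev_es,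
      if_neg (by omega), add_zero]
  · rw [hQ, Set.mem_ofPred_eq, es_le_iff hj', es_le_iff hj, or_assoc]
    refine or_congr_right ?_
    omega

/-- The weights which are `P` on the edges before `j`, then `c, e, f` on the edges `j`, `j + 1`,
`j + 2`, and `t` on the remaining edges; there is no edge `i` unless `i + 1 < n`. -/
def PW (n t : ℕ) (P : ℕ → ℕ) (j c e f : ℕ) : ℕ → ℕ := fun i =>
  if i + 1 < n then
    (if i < j then P i else if i = j then c else if i = j + 1 then e
      else if i = j + 2 then f else t)
  else 0

lemma PW_cut (t : ℕ) (P : ℕ → ℕ) (j c e f : ℕ) (i : ℕ) (h : n ≤ i + 1) :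
    PW n t P j c e f i = 0 := if_neg (by omega)

lemma PW_zero {t : ℕ} {P : ℕ → ℕ} {j : ℕ} (hP : ∀ i, j ≤ i + 1 → P i = 0) (e : ℕ) :
    PW n t P j 0 e t = PW n t P (j + 1) e t t := by
  funext i
  have := hP i
  unfold PW
  split_ifs <;> grind

lemma PW_end {t : ℕ} {P : ℕ → ℕ} {j : ℕ} (hP : ∀ i, j ≤ i + 1 → P i = 0)
    (hPn : ∀ i, n ≤ i + 1 → P i = 0) (hj : n ≤ j + 1) (c e f : ℕ) : PW n t P j c e f = P := by
  funext i
  have := hP i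
  have := hPn i
  unfold PW
  split_ifs <;> grind

/-- Colon by `x_{j+1}`. -/
lemma PW_colon₁ {t : ℕ} {P : ℕ → ℕ} {j c e f : ℕ} (i : ℕ) :
    PW n t P j c e f i = if i = j + 1 ∨ i + 1 = j + 1
      then PW n t P j (c + 1) (e + 1) f i - 1 else PW n t P j (c + 1) (e + 1) f i := by
  unfold PW; split_ifs <;> grind

/-- Colon by `x_{j+2}`. -/
lemma PW_colon₂ {t : ℕ} {P : ℕ → ℕ} {j c e f : ℕ} (i : ℕ) :
    PW n t P j c e f i = if i = j + 1 + 1 ∨ i + 1 = j + 1 + 1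
      then PW n t P j c (e + 1) (f + 1) i - 1 else PW n t P j c (e + 1) (f + 1) i := by
  unfold PW; split_ifs <;> grind

/-- Sum with `x_{j+1}`. -/
lemma PW_sum₁ {t : ℕ} {P : ℕ → ℕ} {j c e g : ℕ} (hP : ∀ i, j ≤ i + 1 → P i = 0)
    (hg : g = t - e) (i : ℕ) :
    PW n t P (j + 2) g t t i = if i = j ∨ i = j + 1 then 0
      else if i + 1 = j then PW n t P j c e t i - PW n t P j c e t j
      else if i = j + 2 then PW n t P j c e t i - PW n t P j c e t (j + 1)
      else PW n t P j c e t i := by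
  have := hP i
  subst hg
  unfold PW
  by_cases hi : i + 1 < n
  · obtain h | rfl | rfl | rfl | h : i < j ∨ i = j ∨ i = j + 1 ∨ i = j + 2 ∨ j + 3 ≤ i := by omega
    · simp only [hi, if_true, h]
      grind
    · simp [hi, this (by omega)]
    · simp [hi, this (by omega)]
    · grind
    · grind
  · simp [hi]

/-- Sum with `x_{j+2}`, when the weight of the edge `j` is at most that of the edge `j + 1`. -/
lemma PW_sum₂ {t : ℕ} {P : ℕ → ℕ} {j c e f g : ℕ} (hP : ∀ i, j ≤ i + 1 → P i = 0)
    (hj : j + 2 < n) (hce : c ≤ e) (hg : g = t - f) (i : ℕ) :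
    PW n t P (j + 3) g t t i = if i = j + 1 ∨ i = j + 1 + 1 then 0
      else if i + 1 = j + 1 then PW n t P j c e f i - PW n t P j c e f (j + 1)
      else if i = j + 1 + 2 then PW n t P j c e f i - PW n t P j c e f (j + 1 + 1)
      else PW n t P j c e f i := by
  have := hP i
  subst hg
  unfold PW
  by_cases hi : i + 1 < n
  · obtain h | rfl | rfl | rfl | h : i < j ∨ i = j ∨ i = j + 1 ∨ i = j + 2 ∨ j + 3 ≤ i := by omega
    · simp only [hi, if_true, h]
      grind
    · simp [hi, this, show i + 1 + 1 < n by omega]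
      grind
    · simp [hi, this (by omega)]
    · grind
    · grind
  · simp [hi]

end Weights

/-! ### Bounds for depth -/

section Depth

variable {K : Type u} [Field K] {n : ℕ}

/-- The numerical condition under which the path with `L` edges of weights `c, t, …, t` has depth
at least `n - 1 - s`. -/
def CondB (t L c s : ℕ) : Prop := ∀ e, L = 2 * s + 1 + e → c + e * t ≤ s

/-- The numerical condition which, together with `CondB`, ensures that the path with `L` edges of
weights `c, t, …, t` has depth at most `n - 1 - s`. -/
def CondA (t L c s : ℕ) : Prop := ∃ e, L + 1 = 2 * s + e ∧ s ≤ c + e * t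

lemma CondB.next {t L c s L' b : ℕ} (h : CondB t L c s) (hL : L = L' + 1) (hb : b ≤ t) :
    CondB t L' b s := by
  intro e he
  have := h (e + 1) (by omega)
  rw [add_mul] at this
  omega

lemma CondB.two {t L c s i : ℕ} (h : CondB t L c (s + 1)) (hi : i < c) : CondB t (L - 2) i s := by
  intro e he
  have := h e (by omega)
  omega

lemma CondB.three {t L c s k : ℕ} (h : CondB t L c (s + 1)) (hc : 1 ≤ c) (hk : k + c ≤ t) :
    CondB t (L - 3) k s := by
  intro e he
  have := h (e + 1) (by omega)
  rw [add_mul] at this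
  omega

lemma CondB.pos {t L c s : ℕ} (h : CondB t L c s) (hL : 1 ≤ L) (hc : 1 ≤ c) : 1 ≤ s := by
  by_contra hs
  have := h (L - 1) (by omega)
  omega

lemma CondA.next {t L s : ℕ} (h : CondA t L 0 s) (hs : 1 ≤ s) :
    1 ≤ L ∧ CondA t (L - 1) t s := by
  obtain ⟨e, he, h⟩ := h
  obtain _ | e := e
  · omega
  · rw [add_mul] at h
    exact ⟨by omega, e, by omega, by omega⟩

lemma CondA.two {t L c s : ℕ} (h : CondA t L (c + 1) (s + 1)) :
    1 ≤ L ∧ CondA t (L - 2) c s := by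
  obtain ⟨e, he, h⟩ := h
  by_cases hL : 2 ≤ L
  · exact ⟨by omega, e, by omega, by omega⟩
  · exact ⟨by omega, 1, by omega, by omega⟩

/-- The lower bound for depth. The edge `j` of weight `c` is reduced to weight zero by colons with
`x_{j+1}`; each of the sums met on the way splits off two edges, at the cost of one unit of
depth. -/
theorem low_PW {t m0 : ℕ} (L : ℕ) : ∀ {P : ℕ → ℕ} {j c s : ℕ}, n - 1 - j = L →
    (∀ i, j ≤ i + 1 → P i = 0) → (∀ i, n ≤ i + 1 → P i = 0) → Low K n P m0 → CondB t L c s →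
    c ≤ t → Low K n (PW n t P j c t t) (m0 + s) := by
  induction L using Nat.strong_induction_on with
  | _ L ih =>
  intro P j c s hL hP hPn hlow hB hc
  by_cases hj : n ≤ j + 1
  · rw [PW_end hP hPn hj]
    exact hlow.mono (by omega)
  have hP' : ∀ j', j ≤ j' → ∀ i, j' ≤ i + 1 → P i = 0 := fun j' h i hi => hP i (by omega)
  have key : ∀ i ≤ c, Low K n (PW n t P j i (t - c + i) t) (m0 + s) := by
    intro i
    induction i with
    | zero =>
      intro _
      rw [PW_zero hP]
      exact ih (L - 1) (by omega) (by omega) (hP' _ (by omega)) hPn hlow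
        (hB.next (by omega) (by omega)) (by omega)
    | succ i ihi =>
      intro hi
      obtain ⟨s, rfl⟩ : ∃ s', s = s' + 1 := ⟨s - 1, by
        have := hB.pos (by omega) (by omega)
        omega⟩
      refine Low.step (u := j) (by omega) (PW_cut _ _ _ _ _ _) PW_colon₁ (PW_sum₁ hP rfl)
        (ihi (by omega)) (s' := m0 + s) ?_ (by omega)
      exact ih (L - 2) (by omega) (by omega) (hP' _ (by omega)) hPn hlow
        (hB.two (by omega)) (by omega)
  have := key c le_rfl
  rwa [Nat.sub_add_cancel hc] at this

/-- Giving weight one to the edge `j` keeps the weights zero from the edge `j + 1` onwards. -/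
lemma update_zero {P : ℕ → ℕ} {j : ℕ} (hP : ∀ i, j ≤ i + 1 → P i = 0) :
    ∀ i, j + 2 ≤ i + 1 → Function.update P j 1 i = 0 := by
  intro i hi
  rw [Function.update_of_ne (by omega)]
  exact hP i (by omega)

lemma low_update {P : ℕ → ℕ} {j m0 : ℕ} (hj : j + 1 < n) (hP : ∀ i, j ≤ i + 1 → P i = 0)
    (h : Low K n P m0) : Low K n (Function.update P j 1) (m0 + 1) := by
  refine Low.isolated hj (fun i hi => update_zero hP i (by omega)) (w0 := P) (fun i => ?_)
    (by simp) (update_zero hP _ le_rfl) (fun i hi => ?_) h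
  · by_cases hi : i = j
    · simp [hi, hP j]
    · simp [hi]
  · rw [Function.update_of_ne (by omega)]
    exact hP i (by omega)

/-- The upper bound for depth when a new disjoint edge `{j, j + 1}` of weight one is added. The
first edge gives `(x_j, x_{j+1})`; later edges are handled by Mayer-Vietoris, since `x_j, x_{j+1}`
is a regular sequence modulo the ideal of the old edges. -/
lemma up_update {P : ℕ → ℕ} {j m0 : ℕ} (hj : j + 1 < n) (hP : ∀ i, j ≤ i + 1 → P i = 0)
    (hm : 2 * m0 ≤ j) (h : Low K n P m0) (h0 : m0 = 0 → P = fun _ => 0)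
    (hup : 1 ≤ m0 → Up K n P m0) : Up K n (Function.update P j 1) (m0 + 1) := by
  intro d hd hD
  set Q : Set (Fin n →₀ ℕ) := IW n (Function.update (fun _ => 0) j 1) with hQdef
  have hQ : ∀ a, a ∈ Q ↔ 1 ≤ ev a j + ev a (j + 1) := by
    intro a
    rw [hQdef, mem_IW]
    constructor
    · intro h
      simpa using h j
    · intro h i
      by_cases hi : i = j
      · subst hi; simpa using h
      · simp [hi]
  rcases Nat.eq_zero_or_pos m0 with hm0 | hm0
  · rw [h0 hm0] at hD
    refine not_depthGE_empty (K := K) (n := n) (DepthGE.mono (d := d + 2) ?_ (by omega))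
    exact DepthGE.add_two isUpperSet_empty hj (by simp) (by simp) (by simpa using hQ) hD
  · obtain ⟨d', hd'⟩ : ∃ d', n = d' + m0 + 2 := ⟨n - m0 - 2, by omega⟩
    refine hup hm0 (d' + 2) (by omega) ?_
    have hinv : ∀ v k a, j ≤ v → (a ∈ IW n P ↔ a + es n v k ∈ IW n P) := by
      intro v k a hv
      simp only [mem_IW, ev_add, ev_es]
      refine forall_congr' fun i => ?_
      have := hP i
      split_ifs <;> omega
    refine DepthGE.add_two (Q := IW n P ∪ Q) (isUpperSet_IW P) hj (fun a => hinv _ _ a le_rfl)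
      (fun a => hinv _ _ a (by omega)) (fun a => by rw [Set.mem_union, hQ]) ?_
    have hint : IW n P ∩ Q = IW n (Function.update P j 1) := by
      ext a
      rw [Set.mem_inter_iff, hQ, mem_IW, mem_IW]
      constructor
      · rintro ⟨h1, h2⟩ i
        by_cases hi : i = j
        · subst hi; simpa using h2
        · simpa [hi] using h1 i
      · intro h
        refine ⟨fun i => ?_, by simpa using h j⟩
        by_cases hi : i = j
        · subst hi; rw [hP i (by omega)]; exact Nat.zero_le _
        · simpa [hi] using h i
    refine DepthGE.union (isUpperSet_IW P) (isUpperSet_IW _) ?_ (h d' (by omega)) ?_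
    · rw [hint]
      exact hD.mono (by omega)
    · exact low_update hj (by simp) low_zero d' (by omega)

/-- The edge `j` of weight one, followed by an edge of weight zero, becomes part of the prefix. -/
lemma PW_update {t : ℕ} {P : ℕ → ℕ} {j : ℕ} (hP : ∀ i, j ≤ i + 1 → P i = 0) (c : ℕ) :
    PW n t P j 1 0 c = PW n t (Function.update P j 1) (j + 2) c t t := by
  funext i
  have := hP i
  unfold PW
  by_cases hi : i + 1 < n
  · simp only [Function.update_apply]
    grind
  · simp [hi]

/-- The edge `j` becomes part of the prefix when it is the last edge; all later weights are then
cut off. -/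
lemma PW_update_end {t : ℕ} {P : ℕ → ℕ} {j : ℕ} (hj : n ≤ j + 2) (e f c : ℕ) :
    PW n t P j 1 e f = PW n t (Function.update P j 1) (j + 2) c t t := by
  funext i
  unfold PW
  by_cases hi : i + 1 < n
  · simp only [Function.update_apply]
    grind
  · simp [hi]

/-- The upper bound for depth. Colons with `x_{j+1}` and then with `x_{j+2}`, at each of which the
sum has at least the target depth by the lower bound, bring the weights `c, t, t` at `j` to
`1, 0, c - 1`: this splits off the edge `j`, and leaves a shorter path whose first edge has
weight `c - 1`. The prefix `P` carries the `m0` edges already split off. -/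
theorem not_depthGE_PW {t : ℕ} (ht : 1 ≤ t) (L : ℕ) : ∀ {P : ℕ → ℕ} {j c m0 s : ℕ},
    n - 1 - j = L → (∀ i, j ≤ i + 1 → P i = 0) → (∀ i, n ≤ i + 1 → P i = 0) →
    2 * m0 ≤ j → Low K n P m0 → (m0 = 0 → P = fun _ => 0) → (1 ≤ m0 → Up K n P m0) →
    CondA t L c s → CondB t L c s → c ≤ t → 1 ≤ m0 + s → m0 + s + 1 ≤ n →
    ¬ DepthGE K (n - (m0 + s)) (IW n (PW n t P j c t t)) := by
  induction L using Nat.strong_induction_on with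
  | _ L ih =>
  intro P j c m0 s hL hP hPn hm hlow h0 hup hA hB hc hpos hn
  -- For `s = 0` the conditions leave no edge of positive weight after the prefix.
  rcases Nat.eq_zero_or_pos s with rfl | hs
  · have hPW : PW n t P j c t t = P := by
      rcases Nat.eq_zero_or_pos L with hL0 | hLpos
      · exact PW_end hP hPn (by omega) _ _ _
      · have hB' := hB (L - 1) (by omega)
        have hc0 : c = 0 := by omega
        have hL1 : (L - 1) * t = 0 := by omega
        rcases Nat.mul_eq_zero.1 hL1 with hL1 | hL1
        · rw [hc0, PW_zero hP]
          exact PW_end (fun i hi => hP i (by omega)) hPn (by omega) _ _ _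
        · omega
    rw [hPW]
    exact hup (by omega) _ (by omega)
  obtain ⟨s, rfl⟩ : ∃ s', s = s' + 1 := ⟨s - 1, by omega⟩
  obtain _ | c := c
  · obtain ⟨hL1, hA'⟩ := hA.next (by omega)
    rw [PW_zero hP]
    exact ih (L - 1) (by omega) (by omega) (fun i hi => hP i (by omega)) hPn (by omega) hlow h0
      hup hA' (hB.next (by omega) le_rfl) le_rfl hpos hn
  obtain ⟨hL1, hA'⟩ := hA.two
  have hj : j + 1 < n := by omega
  have hP'n : ∀ i, n ≤ i + 1 → Function.update P j 1 i = 0 := fun i hi =>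
    update_zero hP i (by omega)
  have hrec : ¬ DepthGE K (n - (m0 + s + 1))
      (IW n (PW n t (Function.update P j 1) (j + 2) c t t)) := by
    have := ih (L - 2) (by omega) (j := j + 2) (m0 := m0 + 1) (s := s) (by omega)
      (update_zero hP) hP'n
      (by omega) (low_update hj hP hlow) (by omega) (fun _ => up_update hj hP hm hlow h0 hup)
      hA' (hB.two (by omega)) (by omega) (by omega) (by omega)
    rwa [show m0 + 1 + s = m0 + s + 1 by omega] at this
  have hstart : ¬ DepthGE K (n - (m0 + s + 1)) (IW n (PW n t P j 1 (t - c) t)) := by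
    by_cases hj2 : j + 2 < n
    · have key : ∀ r ≤ t - c,
          ¬ DepthGE K (n - (m0 + s + 1)) (IW n (PW n t P j 1 r (c + r))) := by
        intro r
        induction r with
        | zero => intro _; rwa [add_zero, PW_update hP]
        | succ r ihr =>
          intro hr
          refine not_depthGE_step (u := j + 1) hj2 (PW_cut _ _ _ _ _ _) PW_colon₂
            (PW_sum₂ hP hj2 (by omega) rfl) (by omega) (ihr (by omega)) ?_
          exact low_PW (L - 3) (by omega) (fun i hi => hP i (by omega)) hPn hlow
            (hB.three (by omega) (by omega)) (by omega)
      have := key (t - c) le_rfl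
      rwa [show c + (t - c) = t by omega] at this
    · rwa [PW_update_end (c := c) (by omega)]
  have key : ∀ i ≤ c,
      ¬ DepthGE K (n - (m0 + s + 1)) (IW n (PW n t P j (i + 1) (t - c + i) t)) := by
    intro i
    induction i with
    | zero => intro _; exact hstart
    | succ i ihi =>
      intro hi
      refine not_depthGE_step (u := j) hj (PW_cut _ _ _ _ _ _) PW_colon₁
        (PW_sum₁ hP rfl) (by omega) (ihi (by omega)) ?_
      exact low_PW (L - 2) (by omega) (fun i hi => hP i (by omega)) hPn hlow
        (hB.two (by omega)) (by omega)
  have := key c le_rfl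
  rwa [show t - c + c = t by omega] at this

end Depth

/-! ### Powers of the cover ideal -/

section CoverIdeal

variable {K : Type u} [Field K] {n : ℕ}

/-- The weights of the `t`-th power of the cover ideal of the path: `t` on every edge. -/
def pathWeight (n t : ℕ) : ℕ → ℕ := fun i => if i + 1 < n then t else 0

lemma coverIdeal_path :
    coverIdeal K (SimpleGraph.pathGraph n) = monoIdeal K (IW n (pathWeight n 1)) := by
  ext p
  rw [mem_monoIdeal (isUpperSet_IW _)]
  simp only [coverIdeal, Submodule.mem_iInf, SimpleGraph.pathGraph_adj]
  have hspan : ∀ u v : Fin n, p ∈ Ideal.span {X u, X v} ↔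
      ∀ a ∈ p.support, a u ≠ 0 ∨ a v ≠ 0 := by
    intro u v
    rw [← Set.image_pair, mem_ideal_span_X_image]
    simp
  simp only [hspan, mem_IW]
  constructor
  · intro h a ha i
    unfold pathWeight
    split_ifs with hi
    · have := h ⟨i, by omega⟩ ⟨i + 1, hi⟩ (Or.inl rfl) a ha
      rw [ev, dif_pos (by omega), ev, dif_pos hi]
      omega
    · exact Nat.zero_le _
  · have aux : ∀ (u v : Fin n) (a : Fin n →₀ ℕ), u.1 + 1 = v.1 →
        (∀ i, pathWeight n 1 i ≤ ev a i + ev a (i + 1)) → a u ≠ 0 ∨ a v ≠ 0 := by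
      intro u v a huv h
      have := h u.1
      rw [pathWeight, if_pos (by omega), ev, dif_pos u.2, ev, dif_pos (by omega)] at this
      have hv : (⟨u.1 + 1, by omega⟩ : Fin n) = v := Fin.ext huv
      rw [hv] at this
      simp only [Fin.eta] at this
      omega
    rintro h u v (huv | huv) a ha
    · exact aux u v a huv (h a ha)
    · exact (aux v u a huv (h a ha)).symm

/-- The path is bipartite, so an exponent vector of weight `t + 1` splits off a vertex cover: the
odd vertices of positive exponent together with the even vertices of exponent at least `t + 1`. -/
lemma exists_split {t : ℕ} {a : Fin n →₀ ℕ} (ha : a ∈ IW n (pathWeight n (t + 1))) :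
    ∃ b ∈ IW n (pathWeight n t), ∃ c ∈ IW n (pathWeight n 1), b + c = a := by
  let c : Fin n →₀ ℕ := Finsupp.equivFunOnFinite.symm fun i =>
    if (if i.1 % 2 = 1 then 1 else t + 1) ≤ a i then 1 else 0
  have hc : ∀ i, ev c i = if (if i % 2 = 1 then 1 else t + 1) ≤ ev a i then 1 else 0 := by
    intro i
    unfold ev
    split_ifs <;> simp_all [c]
  have hca : c ≤ a := by
    rw [le_iff_ev]
    intro i
    rw [hc]
    split_ifs <;> omega
  have hb : ∀ i, ev (a - c) i = ev a i - ev c i := by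
    intro i
    unfold ev
    split_ifs <;> simp
  refine ⟨a - c, fun i => ?_, c, fun i => ?_, tsub_add_cancel_of_le hca⟩
  · have := ha i
    rw [hb, hb, hc, hc]
    unfold pathWeight at *
    split_ifs at * <;> omega
  · have := ha i
    rw [hc, hc]
    unfold pathWeight at *
    split_ifs at * <;> omega

lemma coverIdeal_path_pow (t : ℕ) (ht : 1 ≤ t) :
    coverIdeal K (SimpleGraph.pathGraph n) ^ t = monoIdeal K (IW n (pathWeight n t)) := by
  induction t, ht using Nat.le_induction with
  | base => rw [pow_one, coverIdeal_path]
  | succ t ht ih =>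
    rw [pow_succ, ih, coverIdeal_path, monoIdeal, monoIdeal, monoIdeal, Ideal.span_mul_span']
    congr 1
    ext p
    simp only [Set.mem_mul, Set.mem_image]
    constructor
    · rintro ⟨_, ⟨b, hb, rfl⟩, _, ⟨c, hc, rfl⟩, rfl⟩
      refine ⟨b + c, fun i => ?_, by rw [monomial_mul, one_mul]⟩
      have h1 := hb i
      have h2 := hc i
      rw [ev_add, ev_add]
      unfold pathWeight at *
      split_ifs at * <;> omega
    · rintro ⟨a, ha, rfl⟩
      obtain ⟨b, hb, c, hc, rfl⟩ := exists_split ha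
      exact ⟨_, ⟨b, hb, rfl⟩, _, ⟨c, hc, rfl⟩, by rw [monomial_mul, one_mul]⟩

lemma pathWeight_eq (t : ℕ) : pathWeight n t = PW n t (fun _ => 0) 0 t t t := by
  funext i
  unfold pathWeight PW
  split_ifs <;> grind

/-- The depth of the path with `n - 1` edges of weight `t`, once the two numerical conditions for
`s` are met. -/
lemma depthQuot_path {t s : ℕ} (ht : 1 ≤ t) (hs : 1 ≤ s) (hsn : s + 1 ≤ n)
    (hA : CondA t (n - 1) t s) (hB : CondB t (n - 1) t s) :
    depthQuot K n (coverIdeal K (SimpleGraph.pathGraph n) ^ t) = n - 1 - s := by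
  rw [coverIdeal_path_pow t ht, pathWeight_eq]
  refine sSup_regular_eq maxIdeal_ne_top ?_ ?_ ?_
  · intro p hp
    rw [mem_monoIdeal (isUpperSet_IW _)] at hp
    rw [mem_maxIdeal_iff]
    rintro a ha rfl
    have := hp 0 ha 0
    rw [← pathWeight_eq, pathWeight, if_pos (by omega)] at this
    simp [ev] at this
    omega
  · have := low_PW (K := K) (n := n) (n - 1) (P := fun _ => 0) (j := 0) (m0 := 0) rfl (by simp)
      (by simp) low_zero hB le_rfl
    exact this _ (by omega)
  · have := not_depthGE_PW (K := K) (n := n) ht (n - 1) (P := fun _ => 0) (j := 0) (m0 := 0) rfl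
      (by simp) (by simp) le_rfl low_zero (fun _ => rfl) (by omega) hA hB le_rfl (by omega)
      (by omega)
    rwa [zero_add, show n - s = n - 1 - s + 1 by omega] at this

end CoverIdeal

end CoverPath

/-- For the odd path `P_n` with `n = 4k + 1` (`k ≥ 1`) and `1 ≤ t ≤ k - 1`,
`depth(R/J(P_n)^t) = 2k + ⌊2k/(2t + 1)⌋`. -/
theorem depth_coverIdeal_pow_odd_path_one (K : Type*) [Field K] (k n t : ℕ)
    (hk : 1 ≤ k) (hn : n = 4 * k + 1) (ht1 : 1 ≤ t) (ht2 : t ≤ k - 1) :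
    depthQuot K n ((coverIdeal K (SimpleGraph.pathGraph n)) ^ t)
      = 2 * k + (2 * k) / (2 * t + 1) := by
  subst hn
  generalize hq : 2 * k / (2 * t + 1) = q at *
  have h1 : (2 * t + 1) * q ≤ 2 * k := hq ▸ Nat.mul_div_le _ _
  have h2 : 2 * k < (2 * t + 1) * (q + 1) := hq ▸ Nat.lt_mul_div_succ _ (by omega)
  have hq1 : q ≤ t * q := Nat.le_mul_of_pos_left q ht1
  have e1 : (2 * t + 1) * q = 2 * (t * q) + q := by ring
  have e2 : (2 * t + 1) * (q + 1) = 2 * (t * q) + q + 2 * t + 1 := by ring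
  rw [CoverPath.depthQuot_path ht1 (s := 2 * k - q) (by omega) (by omega)]
  · omega
  -- `L + 1 = 4 k + 1 = 2 s + (2 q + 1)` for `s = 2 k - q`.
  · refine ⟨2 * q + 1, by omega, ?_⟩
    have : (2 * q + 1) * t = 2 * (t * q) + t := by ring
    omega
  · intro e he
    have e3 : t + e * t = (e + 1) * t := by ring
    have e4 : e + 1 = 2 * q := by omega
    have e5 : 2 * q * t = 2 * (t * q) := by ring
    rw [e3, e4, e5]
    omega
end
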